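/- arXiv:1109.5250 — 3 statements merged into one kernel-verified Lean document; each statement's English description precedes it below -/
import Mathlib

section
/- Let s > 1, let r, q ∈ [1,∞] with r ≤ q, let ω be an s-admissible weight on ℝ^d, let f ∈ L¹(ℝ^d) have compact support, let φ be an s-cutoff, and let Γ₀ ⊂⊂ Γ be open cones in ℝ^d ∖ {0}. If (∫_Γ (|f̂(ξ)|·ω(ξ))^r dξ)^{1/r} < ∞ (essential supremum over Γ when r = ∞), then (∫_{Γ₀} (|ℱ(φf)(ξ)|·ω(ξ))^q dξ)^{1/q} < ∞ (essential supremum over Γ₀ when q = ∞). -/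
open MeasureTheory Complex Set
open scoped ENNReal RealInnerProductSpace NNReal

noncomputable section

namespace Paper

variable {d : ℕ}

/-- The Fourier transform, normalized by `(2π)^{-d/2}`. -/
def FT (f : EuclideanSpace ℝ (Fin d) → ℂ) (ξ : EuclideanSpace ℝ (Fin d)) : ℂ :=
  ((2 * Real.pi) ^ (-(d : ℝ) / 2) : ℝ) *
    ∫ x, f x * Complex.exp (-(⟪x, ξ⟫ : ℝ) * Complex.I)

/-- The short-time Fourier transform `V_φ f (x, ξ)`. -/
def STFT (φ f : EuclideanSpace ℝ (Fin d) → ℂ) (x ξ : EuclideanSpace ℝ (Fin d)) : ℂ :=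
  ((2 * Real.pi) ^ (-(d : ℝ) / 2) : ℝ) *
    ∫ y, f y * (starRingEnd ℂ) (φ (y - x)) * Complex.exp (-(⟪ξ, y⟫ : ℝ) * Complex.I)

/-- A cone in `ℝ^d ∖ {0}`. -/
def IsCone (Γ : Set (EuclideanSpace ℝ (Fin d))) : Prop :=
  (0 : EuclideanSpace ℝ (Fin d)) ∉ Γ ∧ ∀ ξ ∈ Γ, ∀ t : ℝ, 0 < t → t • ξ ∈ Γ

/-- An `s`-cutoff: smooth, compactly supported, with Fourier transform decaying faster
than every `exp (-N |ξ|^{1/s})`. -/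
def IsSCutoff (s : ℝ) (φ : EuclideanSpace ℝ (Fin d) → ℂ) : Prop :=
  ContDiff ℝ (⊤ : ℕ∞) φ ∧ HasCompactSupport φ ∧
    ∀ N : ℝ, 0 < N → ∃ C : ℝ, 0 < C ∧
      ∀ ξ, ‖FT φ ξ‖ ≤ C * Real.exp (-N * ‖ξ‖ ^ (1 / s))

/-- An `s`-admissible weight: positive, measurable, and moderate with respect to an even
submultiplicative weight of sub-exponential growth of order `1/s`. -/
def IsSAdmissible (s : ℝ) (ω : EuclideanSpace ℝ (Fin d) → ℝ) : Prop :=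
  Measurable ω ∧ (∀ x, 0 < ω x) ∧
    ∃ v : EuclideanSpace ℝ (Fin d) → ℝ, Measurable v ∧ (∀ x, 0 < v x) ∧
      (∀ x, v (-x) = v x) ∧ (∀ x y, v (x + y) ≤ v x * v y) ∧
      ∃ C₀ k₀ C₁ : ℝ, 0 < C₀ ∧ 0 < k₀ ∧ 0 < C₁ ∧
        (∀ ξ, v ξ ≤ C₀ * Real.exp (k₀ * ‖ξ‖ ^ (1 / s))) ∧
        ∀ x y, ω (x + y) ≤ C₁ * v x * ω y

/-- The Fourier–Lebesgue seminorm `( ∫_Γ (|f̂| ω)^q )^{1/q}` (ess-sup when `q = ∞`). -/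
def FLSemi (ω : EuclideanSpace ℝ (Fin d) → ℝ) (q : ℝ≥0∞)
    (f : EuclideanSpace ℝ (Fin d) → ℂ) (Γ : Set (EuclideanSpace ℝ (Fin d))) : ℝ≥0∞ :=
  eLpNorm (fun ξ => ‖FT f ξ‖ * ω ξ) q (volume.restrict Γ)

/-- The Fourier–Lebesgue wave-front set `WF_{FL^q_ω} f`. -/
def WF_FL (s : ℝ) (q : ℝ≥0∞) (ω : EuclideanSpace ℝ (Fin d) → ℝ)
    (f : EuclideanSpace ℝ (Fin d) → ℂ) :
    Set (EuclideanSpace ℝ (Fin d) × EuclideanSpace ℝ (Fin d)) :=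
  {z | z.2 ≠ 0 ∧ ∀ φ : EuclideanSpace ℝ (Fin d) → ℂ, IsSCutoff s φ → φ z.1 ≠ 0 →
    ∀ Γ : Set (EuclideanSpace ℝ (Fin d)), IsOpen Γ → IsCone Γ → z.2 ∈ Γ →
      FLSemi ω q (fun x => φ x * f x) Γ = ∞}

/-- The `s`-wave-front set `WF_s f`. -/
def WFs (s : ℝ) (f : EuclideanSpace ℝ (Fin d) → ℂ) :
    Set (EuclideanSpace ℝ (Fin d) × EuclideanSpace ℝ (Fin d)) :=
  {z | z.2 ≠ 0 ∧ ¬ ∃ φ : EuclideanSpace ℝ (Fin d) → ℂ, IsSCutoff s φ ∧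
    (∃ U : Set (EuclideanSpace ℝ (Fin d)), IsOpen U ∧ z.1 ∈ U ∧ ∀ x ∈ U, φ x = 1) ∧
    ∃ Γ : Set (EuclideanSpace ℝ (Fin d)), IsOpen Γ ∧ IsCone Γ ∧ z.2 ∈ Γ ∧
      ∃ C k : ℝ, 0 < C ∧ 0 < k ∧
        ∀ ξ ∈ Γ, ‖FT (fun x => φ x * f x) ξ‖ ≤ C * Real.exp (-k * ‖ξ‖ ^ (1 / s))}

/-- The mixed modulation-space seminorm
`( ∫_Γ ( ∫ |V_g F(x,ξ)|^p dx )^{q/p} ω(ξ)^q dξ )^{1/q}` with the usual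
ess-sup interpretations for `p = ∞` or `q = ∞`. -/
def ModSemi (g F : EuclideanSpace ℝ (Fin d) → ℂ) (ω : EuclideanSpace ℝ (Fin d) → ℝ)
    (p q : ℝ≥0∞) (Γ : Set (EuclideanSpace ℝ (Fin d))) : ℝ≥0∞ :=
  if q = ∞ then
    essSup (fun ξ => eLpNorm (fun x => STFT g F x ξ) p volume * ENNReal.ofReal (ω ξ))
      (volume.restrict Γ)
  else
    (∫⁻ ξ in Γ, (eLpNorm (fun x => STFT g F x ξ) p volume * ENNReal.ofReal (ω ξ)) ^ q.toReal) ^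
      (1 / q.toReal)

/-- The modulation wave-front set `WF_{M^{p,q}_ω} f`, with window `g`. -/
def WF_M (s : ℝ) (p q : ℝ≥0∞) (ω : EuclideanSpace ℝ (Fin d) → ℝ)
    (g f : EuclideanSpace ℝ (Fin d) → ℂ) :
    Set (EuclideanSpace ℝ (Fin d) × EuclideanSpace ℝ (Fin d)) :=
  {z | z.2 ≠ 0 ∧ ∀ φ : EuclideanSpace ℝ (Fin d) → ℂ, IsSCutoff s φ → φ z.1 ≠ 0 →
    ∀ Γ : Set (EuclideanSpace ℝ (Fin d)), IsOpen Γ → IsCone Γ → z.2 ∈ Γ →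
      ModSemi g (fun x => φ x * f x) ω p q Γ = ∞}

/-- Reinterpret a plain vector as a point of Euclidean space. -/
def toE (x : Fin d → ℝ) : EuclideanSpace ℝ (Fin d) :=
  (EuclideanSpace.equiv (Fin d) ℝ).symm x

/-- The point `A k` of the lattice `A(ℤ^d)`. -/
def latPt (A : Matrix (Fin d) (Fin d) ℝ) (k : Fin d → ℤ) : EuclideanSpace ℝ (Fin d) :=
  toE (A.mulVec fun i => (k i : ℝ))

/-- The point `c (Aᵀ)⁻¹ k` of the dual lattice `c (Aᵀ)⁻¹(ℤ^d)`. -/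
def dualLatPt (A : Matrix (Fin d) (Fin d) ℝ) (c : ℝ) (k : Fin d → ℤ) :
    EuclideanSpace ℝ (Fin d) :=
  toE (c • (A.transpose⁻¹.mulVec fun i => (k i : ℝ)))

/-- The parallelepiped `x₁ + A([0,1]^d)`. -/
def lattPara (A : Matrix (Fin d) (Fin d) ℝ) (x₁ : EuclideanSpace ℝ (Fin d)) :
    Set (EuclideanSpace ℝ (Fin d)) :=
  (fun t : Fin d → ℝ => x₁ + toE (A.mulVec t)) '' (Set.univ.pi fun _ => Set.Icc 0 1)

/-- The adjoint short-time Fourier transform `V*_φ F`. -/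
def VStar (φ : EuclideanSpace ℝ (Fin d) → ℂ)
    (F : EuclideanSpace ℝ (Fin d) × EuclideanSpace ℝ (Fin d) → ℂ)
    (t : EuclideanSpace ℝ (Fin d)) : ℂ :=
  ((2 * Real.pi) ^ (-(d : ℝ) / 2) : ℝ) *
    ∫ z : EuclideanSpace ℝ (Fin d) × EuclideanSpace ℝ (Fin d),
      F z * Complex.exp ((⟪z.2, t⟫ : ℝ) * Complex.I) * φ (t - z.1)

lemma cone_gap {Γ₀ Γ : Set (EuclideanSpace ℝ (Fin d))}
    (h₀c : IsCone Γ₀) (hΓo : IsOpen Γ) (hΓc : IsCone Γ)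
    (hsub : closure Γ₀ \ {0} ⊆ Γ) :
    ∃ c : ℝ, 0 < c ∧ ∀ ξ ∈ Γ₀, ∀ ζ, ζ ∉ Γ → c * ‖ξ‖ ≤ ‖ξ - ζ‖ := by
  have hK : IsCompact (closure Γ₀ ∩ Metric.sphere (0 : EuclideanSpace ℝ (Fin d)) 1) :=
    (isCompact_sphere _ _).inter_left isClosed_closure
  have hKΓ : closure Γ₀ ∩ Metric.sphere (0 : EuclideanSpace ℝ (Fin d)) 1 ⊆ Γ := by
    rintro x ⟨hx, hx1⟩
    apply hsub
    refine ⟨hx, ?_⟩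
    rintro rfl
    simp at hx1
  obtain ⟨δ, hδ, hsubδ⟩ := hK.exists_thickening_subset_open hΓo hKΓ
  refine ⟨δ, hδ, fun ξ hξ ζ hζ => ?_⟩
  by_contra! hlt
  have hξ0 : ξ ≠ 0 := fun h => h₀c.1 (h ▸ hξ)
  have hn : 0 < ‖ξ‖ := norm_pos_iff.mpr hξ0
  apply hζ
  have h1 : ‖ξ‖⁻¹ • ζ ∈ Γ := by
    apply hsubδ
    rw [Metric.mem_thickening_iff]
    refine ⟨‖ξ‖⁻¹ • ξ, ⟨subset_closure (h₀c.2 ξ hξ _ (inv_pos.mpr hn)), ?_⟩, ?_⟩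
    · simp [norm_smul, hn.ne']
    · rw [dist_comm, dist_eq_norm, ← smul_sub, norm_smul, norm_inv, norm_norm,
        inv_mul_lt_iff₀ hn]
      linarith
  have h2 := hΓc.2 _ h1 ‖ξ‖ hn
  rwa [smul_smul, mul_inv_cancel₀ hn.ne', one_smul] at h2

lemma interp {r q : ℝ≥0∞} (hr : 1 ≤ r) (hrt : r ≠ ∞) (hrq : r ≤ q)
    {E : Type*} [MeasurableSpace E] (μ : Measure E)
    (F : E → ℝ≥0∞) (M : ℝ≥0∞) (hM : M ≠ ∞) (hFM : ∀ x, F x ≤ M)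
    (hF : ∫⁻ x, F x ^ r.toReal ∂μ < ∞) : eLpNorm F q μ < ∞ := by
  rcases eq_or_ne q ∞ with rfl | hq
  · rw [eLpNorm_exponent_top]
    refine lt_of_le_of_lt (essSup_le_of_ae_le M (Filter.Eventually.of_forall fun x => ?_)) hM.lt_top
    simpa using hFM x
  have hr0 : 0 < r.toReal := ENNReal.toReal_pos (by positivity) hrt
  have hrq' : r.toReal ≤ q.toReal := ENNReal.toReal_mono hq hrq
  have hq0 : q ≠ 0 := (lt_of_lt_of_le (by positivity) hrq).ne'
  rw [eLpNorm_lt_top_iff_lintegral_rpow_enorm_lt_top hq0 hq]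
  have hb : ∀ x, ‖F x‖ₑ ^ q.toReal ≤ M ^ (q.toReal - r.toReal) * F x ^ r.toReal := by
    intro x
    have : q.toReal = (q.toReal - r.toReal) + r.toReal := by ring
    rw [enorm_eq_self]
    conv_lhs => rw [this, ENNReal.rpow_add_of_nonneg _ _ (by linarith) hr0.le]
    gcongr
    exact hFM x
  have hMt : M ^ (q.toReal - r.toReal) ≠ ∞ := ENNReal.rpow_ne_top_of_nonneg (by linarith) hM
  calc _ ≤ ∫⁻ x, M ^ (q.toReal - r.toReal) * F x ^ r.toReal ∂μ := lintegral_mono hb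
    _ = M ^ (q.toReal - r.toReal) * ∫⁻ x, F x ^ r.toReal ∂μ := lintegral_const_mul' _ _ hMt
    _ < ∞ := ENNReal.mul_lt_top hMt.lt_top hF

lemma conv_bound {r q : ℝ≥0∞} (hr : 1 ≤ r) (hrq : r ≤ q)
    (K H : EuclideanSpace ℝ (Fin d) → ℝ≥0∞) (hK : Measurable K) (hH : Measurable H)
    (hK1 : ∀ x, K x ≤ 1) (hKi : ∫⁻ x, K x < ∞) (hHr : eLpNorm H r volume < ∞) :
    eLpNorm (fun ξ => ∫⁻ η, K η * H (ξ - η)) q volume < ∞ := by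
  set ν : Measure (EuclideanSpace ℝ (Fin d)) := volume.withDensity K with hν
  have hνu : ν univ < ∞ := by simpa [hν] using hKi
  have hHm : ∀ ξ, Measurable fun η => H (ξ - η) := fun ξ => hH.comp (by fun_prop)
  set c : ℝ≥0∞ := ν univ ^ (1 / (1 : ℝ≥0∞).toReal - 1 / r.toReal) with hc
  have hexp : 0 ≤ 1 / (1 : ℝ≥0∞).toReal - 1 / r.toReal := by
    rcases eq_or_ne r ∞ with rfl | hrt
    · simp
    have : 1 ≤ r.toReal := by simpa using ENNReal.toReal_mono hrt hr
    have := inv_le_one_of_one_le₀ this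
    simp; linarith
  have hct : c ≠ ∞ := ENNReal.rpow_ne_top_of_nonneg hexp hνu.ne
  have hpt : ∀ ξ, ∫⁻ η, K η * H (ξ - η) ≤ eLpNorm (fun η => H (ξ - η)) r ν * c := by
    intro ξ
    have h1 := eLpNorm_le_eLpNorm_mul_rpow_measure_univ (μ := ν) hr
      (f := fun η => H (ξ - η)) (hHm ξ).aestronglyMeasurable
    rw [eLpNorm_one_eq_lintegral_enorm] at h1
    simp only [enorm_eq_self] at h1
    rwa [hν, lintegral_withDensity_eq_lintegral_mul _ hK (hHm ξ)] at h1
  rcases eq_or_ne r ∞ with rfl | hrt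
  · obtain rfl : q = ∞ := top_le_iff.mp hrq
    have hsh : ∀ ξ, eLpNorm (fun η => H (ξ - η)) ∞ ν ≤ eLpNorm H ∞ volume := by
      intro ξ
      calc eLpNorm (fun η => H (ξ - η)) ∞ ν ≤ eLpNorm (fun η => H (ξ - η)) ∞ volume := by
            rw [eLpNorm_exponent_top, eLpNorm_exponent_top]
            exact essSup_mono_measure (withDensity_absolutelyContinuous _ _)
        _ = eLpNorm H ∞ volume :=
            eLpNorm_comp_measurePreserving hH.aestronglyMeasurable
              (Measure.measurePreserving_sub_left volume ξ)
    rw [eLpNorm_exponent_top]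
    refine lt_of_le_of_lt (essSup_le_of_ae_le (eLpNorm H ∞ volume * c)
      (Filter.Eventually.of_forall fun ξ => ?_)) (ENNReal.mul_lt_top hHr hct.lt_top)
    simp only [enorm_eq_self]
    exact (hpt ξ).trans (by gcongr; exact hsh ξ)
  have hr0' : r ≠ 0 := (lt_of_lt_of_le (by positivity) hr).ne'
  have hr0 : 0 < r.toReal := ENNReal.toReal_pos hr0' hrt
  have hHi := (eLpNorm_lt_top_iff_lintegral_rpow_enorm_lt_top hr0' hrt).1 hHr
  simp only [enorm_eq_self] at hHi
  set J := ∫⁻ x, H x ^ r.toReal with hJ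
  have hpt2 : ∀ ξ, (∫⁻ η, K η * H (ξ - η)) ^ r.toReal
      ≤ (∫⁻ η, K η * H (ξ - η) ^ r.toReal) * c ^ r.toReal := by
    intro ξ
    calc _ ≤ (eLpNorm (fun η => H (ξ - η)) r ν * c) ^ r.toReal := by gcongr; exact hpt ξ
      _ = _ := by
        rw [ENNReal.mul_rpow_of_nonneg _ _ hr0.le, eLpNorm_eq_lintegral_rpow_enorm_toReal hr0' hrt,
          ← ENNReal.rpow_mul, one_div, inv_mul_cancel₀ hr0.ne', ENNReal.rpow_one]
        simp only [enorm_eq_self]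
        rw [hν, lintegral_withDensity_eq_lintegral_mul _ hK ((hHm ξ).pow_const _)]
        rfl
  have hcr : c ^ r.toReal ≠ ∞ := ENNReal.rpow_ne_top_of_nonneg hr0.le hct
  have hsub : ∀ ξ, ∫⁻ η, H (ξ - η) ^ r.toReal = J := fun ξ =>
    lintegral_sub_left_eq_self (fun x => H x ^ r.toReal) ξ
  have hsub2 : ∀ η, ∫⁻ ξ, H (ξ - η) ^ r.toReal = J := fun η =>
    lintegral_sub_right_eq_self (fun x => H x ^ r.toReal) η
  refine interp hr hrt hrq volume _ ((J * c ^ r.toReal) ^ (1 / r.toReal))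
    (ENNReal.rpow_ne_top_of_nonneg (by positivity) (ENNReal.mul_ne_top hHi.ne hcr))
    (fun ξ => ?_) ?_
  · rw [one_div, ENNReal.le_rpow_inv_iff hr0]
    refine (hpt2 ξ).trans ?_
    gcongr
    rw [← hsub ξ]
    exact lintegral_mono fun η => mul_le_of_le_one_left' (hK1 η)
  · calc _ ≤ ∫⁻ ξ, (∫⁻ η, K η * H (ξ - η) ^ r.toReal) * c ^ r.toReal := lintegral_mono hpt2
      _ = (∫⁻ ξ, (∫⁻ η, K η * H (ξ - η) ^ r.toReal)) * c ^ r.toReal :=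
        lintegral_mul_const' _ _ hcr
      _ = (∫⁻ η, (∫⁻ ξ, K η * H (ξ - η) ^ r.toReal)) * c ^ r.toReal := by
        rw [lintegral_lintegral_swap]
        apply Measurable.aemeasurable
        exact (hK.comp measurable_snd).mul
          ((hH.comp (measurable_fst.sub measurable_snd)).pow_const _)
      _ = ((∫⁻ η, K η) * J) * c ^ r.toReal := by
        congr 1
        rw [← lintegral_mul_const _ hK]
        refine lintegral_congr fun η => ?_
        have hm : Measurable fun ξ => H (ξ - η) ^ r.toReal :=
          (hH.comp (measurable_id.sub_const η)).pow_const _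
        rw [lintegral_const_mul _ hm, hsub2]
      _ < ∞ := ENNReal.mul_lt_top (ENNReal.mul_lt_top hKi hHi) hcr.lt_top

lemma exp_integrable (hd : 0 < d) {a p : ℝ} (ha : 0 < a) (hp : 0 < p) :
    Integrable fun x : EuclideanSpace ℝ (Fin d) => Real.exp (-a * ‖x‖ ^ p) := by
  have : Nonempty (Fin d) := ⟨⟨0, hd⟩⟩
  rw [integrable_fun_norm_addHaar volume (f := fun y : ℝ => Real.exp (-a * y ^ p))]
  have := integrableOn_rpow_mul_exp_neg_mul_rpow (p := p) (s := ((d - 1 : ℕ) : ℝ)) (b := a)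
    (lt_of_lt_of_le (by norm_num) (Nat.cast_nonneg _)) hp ha
  simpa using this

lemma exp_cont {a p : ℝ} (hp : 0 < p) :
    Continuous fun x : EuclideanSpace ℝ (Fin d) => Real.exp (-a * ‖x‖ ^ p) :=
  Real.continuous_exp.comp (continuous_const.mul (continuous_norm.rpow_const fun _ => Or.inr hp.le))

lemma kernel_norm (f : EuclideanSpace ℝ (Fin d) → ℂ) (x ξ : EuclideanSpace ℝ (Fin d)) :
    ‖f x * Complex.exp (-(⟪x, ξ⟫ : ℝ) * Complex.I)‖ = ‖f x‖ := by
  rw [norm_mul, ← Complex.ofReal_neg, Complex.norm_exp_ofReal_mul_I, mul_one]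

lemma kernel_meas {f : EuclideanSpace ℝ (Fin d) → ℂ} (hf : Integrable f)
    (ξ : EuclideanSpace ℝ (Fin d)) :
    AEStronglyMeasurable (fun x => f x * Complex.exp (-(⟪x, ξ⟫ : ℝ) * Complex.I)) volume :=
  hf.1.mul (Continuous.aestronglyMeasurable (by fun_prop))

lemma FT_cont {f : EuclideanSpace ℝ (Fin d) → ℂ} (hf : Integrable f) : Continuous (FT f) := by
  refine continuous_const.mul (continuous_of_dominated (bound := fun x => ‖f x‖)
    (kernel_meas hf) (fun ξ => Filter.Eventually.of_forall fun x => (kernel_norm f x ξ).le)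
    hf.norm (Filter.Eventually.of_forall fun x => by fun_prop))

lemma FT_bdd {f : EuclideanSpace ℝ (Fin d) → ℂ} :
    ∃ M : ℝ, 0 < M ∧ ∀ ξ, ‖FT f ξ‖ ≤ M := by
  refine ⟨(2 * Real.pi) ^ (-(d : ℝ) / 2) * (∫ x, ‖f x‖) + 1, by positivity, fun ξ => ?_⟩
  rw [FT, norm_mul, Complex.norm_of_nonneg (by positivity)]
  have : ‖∫ x, f x * Complex.exp (-(⟪x, ξ⟫ : ℝ) * Complex.I)‖ ≤ ∫ x, ‖f x‖ := by
    refine (norm_integral_le_integral_norm _).trans (le_of_eq ?_)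
    simp_rw [kernel_norm]
  have := mul_le_mul_of_nonneg_left this
    (show 0 ≤ ((2 * Real.pi) ^ (-(d : ℝ) / 2) : ℝ) by positivity)
  linarith

open FourierTransform in
lemma inversion {φ : EuclideanSpace ℝ (Fin d) → ℂ} (hφ : Continuous φ) (hφi : Integrable φ)
    (hFi : Integrable (FT φ)) :
    ∃ c : ℂ, ∀ x, φ x = c * ∫ η, FT φ η * Complex.exp ((⟪x, η⟫ : ℝ) * Complex.I) := by
  set a : ℂ := (((2 * Real.pi) ^ (-(d : ℝ) / 2) : ℝ) : ℂ) with ha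
  have ha0 : a ≠ 0 := by
    rw [ha]; exact_mod_cast (by positivity : ((2 * Real.pi) ^ (-(d : ℝ) / 2) : ℝ) ≠ 0)
  have hpi : (2 * Real.pi) ≠ 0 := by positivity
  have hrel : ∀ w, 𝓕 φ w = a⁻¹ * FT φ ((2 * Real.pi) • w) := by
    intro w
    rw [FT, ← ha, inv_mul_cancel_left₀ ha0, Real.fourier_eq']
    refine integral_congr_ae (Filter.Eventually.of_forall fun x => ?_)
    simp only [smul_eq_mul, inner_smul_right]
    rw [mul_comm]
    congr 2
    push_cast
    ring
  have hFi' : Integrable (𝓕 φ) := by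
    have : Integrable fun w => a⁻¹ * FT φ ((2 * Real.pi) • w) :=
      ((integrable_comp_smul_iff volume (FT φ) hpi).2 hFi).const_mul _
    exact this.congr (Filter.Eventually.of_forall fun w => (hrel w).symm)
  have hinv := hφ.fourierInv_fourier_eq hφi hFi'
  have hsub := fun x : EuclideanSpace ℝ (Fin d) => Measure.integral_comp_smul volume
    (fun η => FT φ η * Complex.exp ((⟪x, η⟫ : ℝ) * Complex.I)) (2 * Real.pi)
  refine ⟨a⁻¹ * ((|((2 * Real.pi) ^ Module.finrank ℝ (EuclideanSpace ℝ (Fin d)))⁻¹| : ℝ) : ℂ),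
    fun x => ?_⟩
  have h1 := congrFun hinv x
  rw [← h1, Real.fourierInv_eq', mul_assoc, ← Complex.real_smul, ← hsub x, ← integral_const_mul]
  refine integral_congr_ae (Filter.Eventually.of_forall fun w => ?_)
  simp only [hrel, smul_eq_mul, inner_smul_right, real_inner_comm x w]
  ring

lemma FT_mul_bound {φ f : EuclideanSpace ℝ (Fin d) → ℂ} (hφ : Continuous φ) (hφi : Integrable φ)
    (hFi : Integrable (FT φ)) (hf : Integrable f) :
    ∃ c : ℝ≥0∞, c ≠ ∞ ∧ ∀ ξ, ‖FT (fun x => φ x * f x) ξ‖ₑ ≤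
      c * ∫⁻ η, ‖FT φ η‖ₑ * ‖FT f (ξ - η)‖ₑ := by
  obtain ⟨c, hc⟩ := inversion hφ hφi hFi
  refine ⟨‖c‖ₑ, enorm_ne_top, fun ξ => ?_⟩
  have key : FT (fun x => φ x * f x) ξ = c * ∫ η, FT φ η * FT f (ξ - η) := by
    set a : ℂ := (((2 * Real.pi) ^ (-(d : ℝ) / 2) : ℝ) : ℂ) with ha
    have e1 : ∀ x, φ x * f x * Complex.exp (-(⟪x, ξ⟫ : ℝ) * Complex.I) =
        c * ∫ η, FT φ η * (f x * Complex.exp (-(⟪x, ξ - η⟫ : ℝ) * Complex.I)) := by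
      intro x
      rw [hc x, mul_assoc, mul_assoc, ← integral_mul_const]
      congr 1
      refine integral_congr_ae (Filter.Eventually.of_forall fun η => ?_)
      have : Complex.exp (-(⟪x, ξ - η⟫ : ℝ) * Complex.I) =
          Complex.exp ((⟪x, η⟫ : ℝ) * Complex.I) * Complex.exp (-(⟪x, ξ⟫ : ℝ) * Complex.I) := by
        rw [← Complex.exp_add, inner_sub_right]
        congr 1
        push_cast
        ring
      simp only [this]
      ring
    rw [FT, ← ha]
    simp_rw [e1]
    rw [integral_const_mul, integral_integral_swap]
    · simp_rw [integral_const_mul]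
      rw [mul_left_comm, ← integral_const_mul]
      congr 1
      refine integral_congr_ae (Filter.Eventually.of_forall fun η => ?_)
      simp only [FT, ← ha]
      ring
    · have hprod := hf.mul_prod hFi
      refine hprod.mono ?_ (Filter.Eventually.of_forall fun z => ?_)
      · have hcont : Continuous fun z : EuclideanSpace ℝ (Fin d) × EuclideanSpace ℝ (Fin d) =>
          Complex.exp (-(⟪z.1, ξ - z.2⟫ : ℝ) * Complex.I) := by fun_prop
        refine (hprod.1.mul hcont.aestronglyMeasurable).congr
          (Filter.Eventually.of_forall fun z => ?_)
        simp only [Function.uncurry, Pi.mul_apply]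
        ring
      · simp only [Function.uncurry]
        rw [norm_mul, kernel_norm, norm_mul, mul_comm]
  rw [key, enorm_mul]
  gcongr
  refine (enorm_integral_le_lintegral_enorm _).trans (le_of_eq ?_)
  simp_rw [enorm_mul]

theorem stmt2 {d : ℕ} (s : ℝ) (hs : 1 < s) (r q : ℝ≥0∞) (hr : 1 ≤ r) (hrq : r ≤ q)
    (ω : EuclideanSpace ℝ (Fin d) → ℝ) (hω : IsSAdmissible s ω)
    (f : EuclideanSpace ℝ (Fin d) → ℂ) (hf : Integrable f) (hfc : HasCompactSupport f)
    (φ : EuclideanSpace ℝ (Fin d) → ℂ) (hφ : IsSCutoff s φ)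
    (Γ₀ Γ : Set (EuclideanSpace ℝ (Fin d)))
    (h₀o : IsOpen Γ₀) (h₀c : IsCone Γ₀) (hΓo : IsOpen Γ) (hΓc : IsCone Γ)
    (hsub : closure Γ₀ \ {0} ⊆ Γ)
    (h : FLSemi ω r f Γ < ∞) :
    FLSemi ω q (fun x => φ x * f x) Γ₀ < ∞ := by
  rcases Nat.eq_zero_or_pos d with rfl | hd
  · have : Γ₀ = ∅ := by
      ext x
      simp only [mem_empty_iff_false, iff_false]
      rw [Subsingleton.elim x 0]
      exact h₀c.1
    simp [FLSemi, this]
  have hp : 0 < 1 / s := by positivity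
  set p := 1 / s with hpdef
  obtain ⟨hωm, hωpos, v, -, hvpos, -, -, C₀, k₀, C₁, hC₀, hk₀, hC₁, hv, hωv⟩ := hω
  obtain ⟨hφs, hφc, hφd⟩ := hφ
  have hφcont : Continuous φ := hφs.continuous
  have hφi : Integrable φ := hφcont.integrable_of_hasCompactSupport hφc
  obtain ⟨δ, hδ, hgap⟩ := cone_gap h₀c hΓo hΓc hsub
  set b := δ ^ p with hb
  have hb0 : 0 < b := Real.rpow_pos_of_pos hδ _
  obtain ⟨C, hC, hg⟩ := hφd (k₀ + k₀ / b + 2) (by positivity)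
  obtain ⟨M, hM, hMf⟩ := FT_bdd (f := f)
  have hFi : Integrable (FT φ) := by
    refine ((exp_integrable hd (a := k₀ + k₀ / b + 2) (by positivity) hp).const_mul C).mono'
      (FT_cont hφi).aestronglyMeasurable (Filter.Eventually.of_forall hg)
  obtain ⟨c, hc, hconv⟩ := FT_mul_bound hφcont hφi hFi hf
  have hcr : c = ENNReal.ofReal c.toReal := (ENNReal.ofReal_toReal hc).symm
  set c' := c.toReal with hc'
  have hc'0 : 0 ≤ c' := ENNReal.toReal_nonneg
  set A : ℝ := c' * (C * C₁ * C₀) with hA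
  have hA0 : 0 ≤ A := by positivity
  set B : ℝ := c' * (C * M * C₁ * C₀ * ω 0) with hB
  have hω0 := hωpos 0
  have hB0 : 0 ≤ B := by positivity
  set K : EuclideanSpace ℝ (Fin d) → ℝ≥0∞ :=
    fun η => ENNReal.ofReal (Real.exp (-1 * ‖η‖ ^ p)) with hK
  set H : EuclideanSpace ℝ (Fin d) → ℝ≥0∞ :=
    Γ.indicator (fun ζ => ENNReal.ofReal (A * (‖FT f ζ‖ * ω ζ))) with hH
  set L : EuclideanSpace ℝ (Fin d) → ℝ≥0∞ :=
    fun ξ => ENNReal.ofReal (B * Real.exp (-b * ‖ξ‖ ^ p)) with hL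
  have hKm : Measurable K := (exp_cont hp).measurable.ennreal_ofReal
  have hLm : Measurable L := ((exp_cont hp).measurable.const_mul B).ennreal_ofReal
  have hHm : Measurable H := by
    refine Measurable.indicator ?_ hΓo.measurableSet
    exact (((FT_cont hf).measurable.norm.mul hωm).const_mul A).ennreal_ofReal
  have hK1 : ∀ x, K x ≤ 1 := by
    intro x
    rw [hK]
    simp only [ENNReal.ofReal_le_one, Real.exp_le_one_iff]
    have : 0 ≤ ‖x‖ ^ p := by positivity
    linarith
  have hKi : ∫⁻ x, K x < ∞ := by
    have := (exp_integrable hd (a := 1) one_pos hp).lintegral_lt_top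
    simpa [hK] using this
  have hHr : eLpNorm H r volume < ∞ := by
    rw [hH, eLpNorm_indicator_eq_eLpNorm_restrict hΓo.measurableSet]
    have h2 : eLpNorm (A • fun ξ => ‖FT f ξ‖ * ω ξ) r (volume.restrict Γ) < ∞ := by
      rw [eLpNorm_const_smul]
      exact ENNReal.mul_lt_top enorm_lt_top h
    refine lt_of_le_of_lt (eLpNorm_mono_enorm fun ξ => ?_) h2
    rw [enorm_eq_self]
    simp only [Pi.smul_apply, smul_eq_mul]
    exact Real.ofReal_le_enorm _
  have hconvL := conv_bound hr hrq K H hKm hHm hK1 hKi hHr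
  -- pointwise bound
  have hpt : ∀ ξ ∈ Γ₀, ∀ η, c * (‖FT φ η‖ₑ * ‖FT f (ξ - η)‖ₑ) * ENNReal.ofReal (ω ξ)
      ≤ K η * H (ξ - η) + K η * L ξ := by
    intro ξ hξ η
    have hωξ := hωpos ξ
    have ht0 : 0 ≤ ‖η‖ ^ p := by positivity
    have hu0 : 0 ≤ ‖ξ‖ ^ p := by positivity
    set t := ‖η‖ ^ p with ht
    set u := ‖ξ‖ ^ p with hu
    have hkb : 0 ≤ k₀ / b := by positivity
    have hlhs : c * (‖FT φ η‖ₑ * ‖FT f (ξ - η)‖ₑ) * ENNReal.ofReal (ω ξ) =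
        ENNReal.ofReal (c' * (‖FT φ η‖ * ‖FT f (ξ - η)‖) * ω ξ) := by
      rw [ENNReal.ofReal_mul (by positivity), ENNReal.ofReal_mul hc'0,
        ENNReal.ofReal_mul (norm_nonneg _), ofReal_norm, ofReal_norm, ← hcr]
    rw [hlhs]
    by_cases hmem : ξ - η ∈ Γ
    · refine le_trans ?_ le_self_add
      rw [hH, indicator_of_mem hmem, hK, ← ENNReal.ofReal_mul (Real.exp_pos _).le]
      apply ENNReal.ofReal_le_ofReal
      have hωζ := hωpos (ξ - η)
      have h1 : ω ξ ≤ C₁ * (C₀ * Real.exp (k₀ * t)) * ω (ξ - η) := by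
        have := hωv η (ξ - η)
        rw [add_sub_cancel] at this
        refine this.trans ?_
        gcongr
        exact hv η
      have h2 : Real.exp (-(k₀ + k₀ / b + 2) * t) * Real.exp (k₀ * t) ≤ Real.exp (-1 * t) := by
        rw [← Real.exp_add, Real.exp_le_exp]
        nlinarith [mul_nonneg hkb ht0]
      calc c' * (‖FT φ η‖ * ‖FT f (ξ - η)‖) * ω ξ
          ≤ c' * ((C * Real.exp (-(k₀ + k₀ / b + 2) * t)) * ‖FT f (ξ - η)‖) *
            (C₁ * (C₀ * Real.exp (k₀ * t)) * ω (ξ - η)) := by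
            gcongr
            exact hg η
        _ = (Real.exp (-(k₀ + k₀ / b + 2) * t) * Real.exp (k₀ * t)) *
            (A * (‖FT f (ξ - η)‖ * ω (ξ - η))) := by rw [hA]; ring
        _ ≤ Real.exp (-1 * t) * (A * (‖FT f (ξ - η)‖ * ω (ξ - η))) := by gcongr
    · refine le_trans ?_ le_add_self
      rw [hL, hK, ← ENNReal.ofReal_mul (Real.exp_pos _).le]
      apply ENNReal.ofReal_le_ofReal
      have hbu : b * u ≤ t := by
        have := hgap ξ hξ _ hmem
        rw [sub_sub_cancel] at this
        have := Real.rpow_le_rpow (by positivity) this hp.le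
        rwa [Real.mul_rpow hδ.le (norm_nonneg _)] at this
      have h1 : ω ξ ≤ C₁ * (C₀ * Real.exp (k₀ * u)) * ω 0 := by
        have := hωv ξ 0
        rw [add_zero] at this
        refine this.trans ?_
        gcongr
        exact hv ξ
      have h3 : k₀ * u ≤ k₀ / b * t := by
        have := mul_le_mul_of_nonneg_left hbu hkb
        rwa [← mul_assoc, div_mul_cancel₀ _ hb0.ne'] at this
      have h2 : Real.exp (-(k₀ + k₀ / b + 2) * t) * Real.exp (k₀ * u) ≤
          Real.exp (-1 * t) * Real.exp (-b * u) := by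
        rw [← Real.exp_add, ← Real.exp_add, Real.exp_le_exp]
        nlinarith [mul_nonneg hk₀.le ht0]
      calc c' * (‖FT φ η‖ * ‖FT f (ξ - η)‖) * ω ξ
          ≤ c' * ((C * Real.exp (-(k₀ + k₀ / b + 2) * t)) * M) *
            (C₁ * (C₀ * Real.exp (k₀ * u)) * ω 0) := by
            gcongr
            · exact hg η
            · exact hMf _
        _ = (Real.exp (-(k₀ + k₀ / b + 2) * t) * Real.exp (k₀ * u)) * B := by rw [hB]; ring
        _ ≤ (Real.exp (-1 * t) * Real.exp (-b * u)) * B := by gcongr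
        _ = Real.exp (-1 * t) * (B * Real.exp (-b * u)) := by ring
  have hpt2 : ∀ ξ ∈ Γ₀, ‖‖FT (fun x => φ x * f x) ξ‖ * ω ξ‖ₑ ≤
      ‖((fun ξ => ∫⁻ η, K η * H (ξ - η)) + fun ξ => (∫⁻ η, K η) * L ξ) ξ‖ₑ := by
    intro ξ hξ
    rw [enorm_eq_self, enorm_mul, enorm_norm, Real.enorm_of_nonneg (hωpos ξ).le]
    have hm : Measurable fun η => K η * H (ξ - η) :=
      hKm.mul (hHm.comp (measurable_const.sub measurable_id))
    calc _ ≤ (c * ∫⁻ η, ‖FT φ η‖ₑ * ‖FT f (ξ - η)‖ₑ) * ENNReal.ofReal (ω ξ) := by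
          gcongr; exact hconv ξ
      _ = ∫⁻ η, c * (‖FT φ η‖ₑ * ‖FT f (ξ - η)‖ₑ) * ENNReal.ofReal (ω ξ) := by
          rw [lintegral_mul_const' _ _ ENNReal.ofReal_ne_top, lintegral_const_mul' _ _ hc]
      _ ≤ ∫⁻ η, (K η * H (ξ - η) + K η * L ξ) := lintegral_mono (hpt ξ hξ)
      _ = _ := by
          rw [lintegral_add_left hm, lintegral_mul_const _ hKm]
          rfl
  have hq1 : 1 ≤ q := hr.trans hrq
  have hLq : eLpNorm (fun ξ => (∫⁻ η, K η) * L ξ) q volume < ∞ := by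
    refine interp le_rfl ENNReal.one_ne_top hq1 volume _ ((∫⁻ η, K η) * ENNReal.ofReal B)
      (ENNReal.mul_ne_top hKi.ne ENNReal.ofReal_ne_top) (fun x => ?_) ?_
    · gcongr
      rw [hL]
      apply ENNReal.ofReal_le_ofReal
      apply mul_le_of_le_one_right hB0
      rw [Real.exp_le_one_iff]
      have : 0 ≤ b * ‖x‖ ^ p := by positivity
      linarith
    · simp only [ENNReal.toReal_one, ENNReal.rpow_one]
      rw [lintegral_const_mul _ hLm]
      exact ENNReal.mul_lt_top hKi ((exp_integrable hd hb0 hp).const_mul B).lintegral_lt_top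
  have hm1 : Measurable fun ξ => ∫⁻ η, K η * H (ξ - η) := by
    apply Measurable.lintegral_prod_right'
      (f := fun z : EuclideanSpace ℝ (Fin d) × EuclideanSpace ℝ (Fin d) => K z.2 * H (z.1 - z.2))
    exact (hKm.comp measurable_snd).mul (hHm.comp (measurable_fst.sub measurable_snd))
  unfold FLSemi
  calc _ ≤ eLpNorm ((fun ξ => ∫⁻ η, K η * H (ξ - η)) + fun ξ => (∫⁻ η, K η) * L ξ) q
        (volume.restrict Γ₀) := by
        apply eLpNorm_mono_enorm_ae
        filter_upwards [ae_restrict_mem h₀o.measurableSet] with ξ hξ using hpt2 ξ hξ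
    _ ≤ eLpNorm ((fun ξ => ∫⁻ η, K η * H (ξ - η)) + fun ξ => (∫⁻ η, K η) * L ξ) q volume :=
        eLpNorm_mono_measure _ Measure.restrict_le_self
    _ ≤ _ := eLpNorm_add_le hm1.aestronglyMeasurable
        (hLm.const_mul _).aestronglyMeasurable hq1
    _ < ∞ := ENNReal.add_lt_top.2 ⟨hconvL, hLq⟩

end Paper
end
end

section
/- Let s ≥ 1 and let g, h : ℝ^d → ℂ be measurable functions such that for every N > 0 there is C > 0 with |g(ζ)| ≤ C·exp(−N·|ζ|^{1/s}) and |h(ζ)| ≤ C·exp(−N·|ζ|^{1/s}) for all ζ ∈ ℝ^d. Then for every N > 0 there is C' > 0 with |(g*h)(ξ)| ≤ C'·exp(−N·|ξ|^{1/s}) for all ξ ∈ ℝ^d. Consequently, since ℱ(φψ) = (2π)^{−d/2}·(φ̂ * ψ̂) for smooth compactly supported φ, ψ, the pointwise product of two s-cutoffs is again an s-cutoff. -/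
open MeasureTheory Complex Set
open scoped ENNReal RealInnerProductSpace NNReal

noncomputable section

namespace Paper

variable {d : ℕ}

theorem aux_integrable {d : ℕ} {p : ℝ} (hp : 0 < p) :
    Integrable (fun η : EuclideanSpace ℝ (Fin d) => Real.exp (-‖η‖ ^ p)) := by
  rcases Nat.eq_zero_or_pos d with rfl | hd
  · have hfin : IsFiniteMeasure (volume : Measure (EuclideanSpace ℝ (Fin 0))) :=
      ⟨(Set.toFinite (Set.univ : Set (EuclideanSpace ℝ (Fin 0)))).isCompact.measure_lt_top⟩
    have hc : (fun η : EuclideanSpace ℝ (Fin 0) => Real.exp (-‖η‖ ^ p))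
        = fun _ => Real.exp (-‖(0 : EuclideanSpace ℝ (Fin 0))‖ ^ p) := by
      funext η
      rw [Subsingleton.elim η 0]
    rw [hc]
    exact integrable_const _
  · have : Nonempty (Fin d) := ⟨⟨0, hd⟩⟩
    have : Nontrivial (EuclideanSpace ℝ (Fin d)) := inferInstance
    refine (integrable_fun_norm_addHaar (volume : Measure (EuclideanSpace ℝ (Fin d)))
      (f := fun y : ℝ => Real.exp (-y ^ p))).mpr ?_
    have h := integrableOn_rpow_mul_exp_neg_rpow (p := p)
      (s := ((Module.finrank ℝ (EuclideanSpace ℝ (Fin d)) - 1 : ℕ) : ℝ))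
      (by
        have : (0 : ℝ) ≤ ((Module.finrank ℝ (EuclideanSpace ℝ (Fin d)) - 1 : ℕ) : ℝ) :=
          Nat.cast_nonneg _
        linarith) hp
    simpa only [Real.rpow_natCast, smul_eq_mul] using h

/-- Superexponential decay of order `1/s`. -/
def Dec {d : ℕ} (s : ℝ) (g : EuclideanSpace ℝ (Fin d) → ℂ) : Prop :=
  ∀ N : ℝ, 0 < N → ∃ C : ℝ, 0 < C ∧ ∀ ζ, ‖g ζ‖ ≤ C * Real.exp (-N * ‖ζ‖ ^ (1 / s))

theorem aux_conv {d : ℕ} {s : ℝ} (hs : 1 ≤ s) {g h : EuclideanSpace ℝ (Fin d) → ℂ}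
    (hg : Dec s g) (hh : Dec s h) : Dec s (fun ξ => ∫ η, g (ξ - η) * h η) := by
  intro N hN
  have hp : 0 < 1 / s := by positivity
  have hp1 : 1 / s ≤ 1 := by
    rw [div_le_one (by linarith)]
    exact hs
  obtain ⟨C1, hC1, h1⟩ := hg N hN
  obtain ⟨C2, hC2, h2⟩ := hh (N + 1) (by linarith)
  have hint := aux_integrable (d := d) hp
  set I := ∫ η : EuclideanSpace ℝ (Fin d), Real.exp (-‖η‖ ^ (1 / s)) with hI
  have hI0 : 0 ≤ I := integral_nonneg fun _ => (Real.exp_pos _).le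
  refine ⟨C1 * C2 * (I + 1), by positivity, fun ξ => ?_⟩
  have hb : ∀ η, ‖g (ξ - η) * h η‖ ≤
      C1 * C2 * Real.exp (-N * ‖ξ‖ ^ (1 / s)) * Real.exp (-‖η‖ ^ (1 / s)) := by
    intro η
    have htri : ‖ξ‖ ^ (1 / s) ≤ ‖ξ - η‖ ^ (1 / s) + ‖η‖ ^ (1 / s) := by
      refine le_trans ?_ (Real.rpow_add_le_add_rpow (norm_nonneg _) (norm_nonneg _) hp.le hp1)
      refine Real.rpow_le_rpow (norm_nonneg _) ?_ hp.le
      simpa using norm_add_le (ξ - η) η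
    rw [norm_mul]
    calc ‖g (ξ - η)‖ * ‖h η‖
        ≤ (C1 * Real.exp (-N * ‖ξ - η‖ ^ (1 / s))) *
            (C2 * Real.exp (-(N + 1) * ‖η‖ ^ (1 / s))) :=
          mul_le_mul (h1 _) (h2 _) (norm_nonneg _) (by positivity)
      _ = C1 * C2 * Real.exp (-N * ‖ξ - η‖ ^ (1 / s) + -(N + 1) * ‖η‖ ^ (1 / s)) := by
          rw [Real.exp_add]
          ring
      _ ≤ C1 * C2 * Real.exp (-N * ‖ξ‖ ^ (1 / s) + -‖η‖ ^ (1 / s)) := by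
          refine mul_le_mul_of_nonneg_left (Real.exp_le_exp.mpr ?_) (by positivity)
          nlinarith [mul_le_mul_of_nonneg_left htri hN.le]
      _ = _ := by
          rw [Real.exp_add]
          ring
  calc ‖∫ η, g (ξ - η) * h η‖
      ≤ ∫ η, C1 * C2 * Real.exp (-N * ‖ξ‖ ^ (1 / s)) * Real.exp (-‖η‖ ^ (1 / s)) :=
        norm_integral_le_of_norm_le (hint.const_mul _) (Filter.Eventually.of_forall hb)
    _ = C1 * C2 * Real.exp (-N * ‖ξ‖ ^ (1 / s)) * I := by
        rw [integral_const_mul]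
    _ ≤ C1 * C2 * Real.exp (-N * ‖ξ‖ ^ (1 / s)) * (I + 1) := by
        gcongr
        linarith
    _ = _ := by ring

open FourierTransform in
theorem aux_FT {d : ℕ} (f : EuclideanSpace ℝ (Fin d) → ℂ) (w : EuclideanSpace ℝ (Fin d)) :
    FT f ((-(2 * Real.pi)) • w) = ((2 * Real.pi) ^ (-(d : ℝ) / 2) : ℝ) * 𝓕⁻ f w := by
  unfold FT
  rw [Real.fourierInv_eq']
  congr 1
  refine integral_congr_ae (Filter.Eventually.of_forall fun x => ?_)
  simp only [smul_eq_mul, inner_smul_right]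
  rw [mul_comm]
  congr 2
  push_cast
  ring

theorem aux_scale {d : ℕ} {s : ℝ} {f g : EuclideanSpace ℝ (Fin d) → ℂ} {a c : ℝ} (hc : 0 < c)
    (ha : 0 < a) (hf : Dec s f) (hfg : ∀ w, ‖g w‖ = c * ‖f ((-a) • w)‖) : Dec s g := by
  intro N hN
  have hap : 0 < a ^ (1 / s) := Real.rpow_pos_of_pos ha _
  obtain ⟨C, hC, h⟩ := hf (N / a ^ (1 / s)) (by positivity)
  refine ⟨c * C, by positivity, fun w => ?_⟩
  rw [hfg, mul_assoc]
  refine mul_le_mul_of_nonneg_left ((h _).trans_eq ?_) hc.le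
  rw [norm_smul, norm_neg, Real.norm_of_nonneg ha.le, Real.mul_rpow ha.le (norm_nonneg _)]
  congr 2
  field_simp

open FourierTransform in
theorem aux_dec_iff {d : ℕ} {s : ℝ} (f : EuclideanSpace ℝ (Fin d) → ℂ) :
    Dec s (FT f) ↔ Dec s (𝓕⁻ f) := by
  have hpi : 0 < 2 * Real.pi := by positivity
  have hk : 0 < (2 * Real.pi) ^ (-(d : ℝ) / 2) := Real.rpow_pos_of_pos hpi _
  have key : ∀ w, ‖FT f ((-(2 * Real.pi)) • w)‖ = (2 * Real.pi) ^ (-(d : ℝ) / 2) * ‖𝓕⁻ f w‖ := by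
    intro w
    rw [aux_FT, norm_mul, Complex.norm_real, Real.norm_of_nonneg hk.le]
  constructor
  · intro h
    refine aux_scale (inv_pos.mpr hk) hpi h fun w => ?_
    rw [key, inv_mul_cancel_left₀ hk.ne']
  · intro h
    refine aux_scale hk (inv_pos.mpr hpi) h fun w => ?_
    rw [← key, smul_smul]
    congr 2
    rw [neg_mul_neg, mul_inv_cancel₀ hpi.ne', one_smul]

open FourierTransform in
theorem aux_prod {d : ℕ} {φ ψ : EuclideanSpace ℝ (Fin d) → ℂ}
    (h1 : ContDiff ℝ (⊤ : ℕ∞) φ) (h1' : HasCompactSupport φ)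
    (h2 : ContDiff ℝ (⊤ : ℕ∞) ψ) (h2' : HasCompactSupport ψ) (x : EuclideanSpace ℝ (Fin d)) :
    𝓕⁻ (fun x => φ x * ψ x) x = ∫ t, 𝓕⁻ ψ (x - t) * 𝓕⁻ φ t := by
  set F := h1'.toSchwartzMap h1
  set G := h2'.toSchwartzMap h2
  have hF : (F : EuclideanSpace ℝ (Fin d) → ℂ) = φ := rfl
  have hG : (G : EuclideanSpace ℝ (Fin d) → ℂ) = ψ := rfl
  have h := SchwartzMap.convolution_apply (ContinuousLinearMap.mul ℂ ℂ) (𝓕⁻ F) (𝓕⁻ G) x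
  have h3 : SchwartzMap.convolution (ContinuousLinearMap.mul ℂ ℂ) (𝓕⁻ F) (𝓕⁻ G)
      = 𝓕⁻ (SchwartzMap.pairing (ContinuousLinearMap.mul ℂ ℂ) F G) := by
    rw [← FourierTransform.fourierInv_fourier_eq
      (F := SchwartzMap (EuclideanSpace ℝ (Fin d)) ℂ)
      (SchwartzMap.convolution (ContinuousLinearMap.mul ℂ ℂ) (𝓕⁻ F) (𝓕⁻ G)),
      SchwartzMap.fourier_convolution, FourierTransform.fourier_fourierInv_eq,
      FourierTransform.fourier_fourierInv_eq]
  rw [h3, SchwartzMap.fourierInv_coe, SchwartzMap.fourierInv_coe, SchwartzMap.fourierInv_coe,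
    SchwartzMap.pairing_apply, hF, hG] at h
  simp only [MeasureTheory.convolution, ContinuousLinearMap.mul_apply'] at h
  rw [h]
  simp only [mul_comm]

theorem stmt4 {d : ℕ} (s : ℝ) (hs : 1 ≤ s)
    (g h : EuclideanSpace ℝ (Fin d) → ℂ) (hg : Measurable g) (hh : Measurable h)
    (hgdec : ∀ N : ℝ, 0 < N → ∃ C : ℝ, 0 < C ∧
      ∀ ζ, ‖g ζ‖ ≤ C * Real.exp (-N * ‖ζ‖ ^ (1 / s)))
    (hhdec : ∀ N : ℝ, 0 < N → ∃ C : ℝ, 0 < C ∧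
      ∀ ζ, ‖h ζ‖ ≤ C * Real.exp (-N * ‖ζ‖ ^ (1 / s))) :
    (∀ N : ℝ, 0 < N → ∃ C' : ℝ, 0 < C' ∧
      ∀ ξ, ‖∫ η, g (ξ - η) * h η‖ ≤ C' * Real.exp (-N * ‖ξ‖ ^ (1 / s))) ∧
    ∀ φ ψ : EuclideanSpace ℝ (Fin d) → ℂ, IsSCutoff s φ → IsSCutoff s ψ →
      IsSCutoff s (fun x => φ x * ψ x) := by
  refine ⟨aux_conv hs hgdec hhdec, fun φ ψ hφ hψ => ?_⟩
  refine ⟨hφ.1.mul hψ.1, hφ.2.1.mul_right, ?_⟩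
  have hφd := (aux_dec_iff φ).mp hφ.2.2
  have hψd := (aux_dec_iff ψ).mp hψ.2.2
  refine (aux_dec_iff _).mpr ?_
  have hc := aux_conv hs hψd hφd
  rwa [← funext fun x => aux_prod hφ.1 hφ.2.1 hψ.1 hψ.2.1 x] at hc

end Paper
end
end

section
/- Let s > 1, q ∈ [1,∞], and let f ∈ L¹(ℝ^d) have compact support. For k > 0 put ω_k(ξ) = exp(k·|ξ|^{1/s}). Then ⋂_{k>0} WF_{FL^q_{ω_k}}(f) = WF_s(f). -/
open MeasureTheory Complex Set
open scoped ENNReal RealInnerProductSpace NNReal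

noncomputable section

namespace Paper

variable {d : ℕ}

abbrev Eu (d : ℕ) := EuclideanSpace ℝ (Fin d)

/-- the normalising constant -/
def cd (d : ℕ) : ℝ := (2 * Real.pi) ^ (-(d : ℝ) / 2)

lemma cd_pos : 0 < cd d := by unfold cd; positivity

lemma FT_def (f : Eu d → ℂ) (ξ : Eu d) :
    FT f ξ = (cd d : ℂ) * ∫ x, f x * Complex.exp (-(⟪x, ξ⟫ : ℝ) * Complex.I) := rfl

lemma FT_eq_fourier (f : Eu d → ℂ) (ξ : Eu d) :
    FT f ξ = (cd d : ℂ) * FourierTransform.fourier f ((2 * Real.pi)⁻¹ • ξ) := by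
  rw [FT_def, Real.fourier_eq']
  congr 1
  apply integral_congr_ae
  filter_upwards with x
  rw [smul_eq_mul, mul_comm, inner_smul_right]
  congr 2
  push_cast
  have : (Real.pi : ℂ) ≠ 0 := by exact_mod_cast Real.pi_ne_zero
  field_simp

lemma norm_cexp (x : ℝ) : ‖Complex.exp (-(x : ℝ) * Complex.I)‖ = 1 := by
  rw [← Complex.ofReal_neg]
  exact Complex.norm_exp_ofReal_mul_I _

lemma norm_cexp' (x : ℝ) : ‖Complex.exp ((x : ℝ) * Complex.I)‖ = 1 :=
  Complex.norm_exp_ofReal_mul_I _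

lemma continuous_FT {f : Eu d → ℂ} (hf : Integrable f) : Continuous (FT f) := by
  have h : FT f = fun ξ => (cd d : ℂ) * FourierTransform.fourier f ((2 * Real.pi)⁻¹ • ξ) := by
    ext ξ; exact FT_eq_fourier f ξ
  rw [h]
  have h2 : Continuous (FourierTransform.fourier f : Eu d → ℂ) :=
    VectorFourier.fourierIntegral_continuous Real.continuous_fourierChar
      (by exact continuous_inner) hf
  fun_prop

lemma norm_FT_le (f : Eu d → ℂ) (ξ : Eu d) : ‖FT f ξ‖ ≤ cd d * ∫ x, ‖f x‖ := by
  rw [FT_def, norm_mul, Complex.norm_real, Real.norm_of_nonneg cd_pos.le]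
  gcongr
  · exact cd_pos.le
  · refine (norm_integral_le_integral_norm _).trans (le_of_eq ?_)
    simp_rw [norm_mul, norm_cexp, mul_one]

lemma integrable_mul_exp {f : Eu d → ℂ} (hf : Integrable f) (ξ : Eu d) :
    Integrable (fun x => f x * Complex.exp (-(⟪x, ξ⟫ : ℝ) * Complex.I)) := by
  refine hf.mono ?_ (by filter_upwards with x; rw [norm_mul, norm_cexp, mul_one])
  refine hf.aestronglyMeasurable.mul (Continuous.aestronglyMeasurable ?_)
  fun_prop

lemma FT_sub {f g : Eu d → ℂ} (hf : Integrable f) (hg : Integrable g) (ξ : Eu d) :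
    FT (fun x => f x - g x) ξ = FT f ξ - FT g ξ := by
  simp only [FT_def, ← mul_sub]
  rw [← integral_sub (integrable_mul_exp hf ξ) (integrable_mul_exp hg ξ)]
  simp only [sub_mul]

lemma FT_add {f g : Eu d → ℂ} (hf : Integrable f) (hg : Integrable g) (ξ : Eu d) :
    FT (fun x => f x + g x) ξ = FT f ξ + FT g ξ := by
  simp only [FT_def, ← mul_add]
  rw [← integral_add (integrable_mul_exp hf ξ) (integrable_mul_exp hg ξ)]
  simp only [add_mul]

lemma FT_const_mul (c : ℂ) (f : Eu d → ℂ) (ξ : Eu d) :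
    FT (fun x => c * f x) ξ = c * FT f ξ := by
  simp only [FT_def]
  rw [mul_left_comm, ← integral_const_mul c]
  simp only [mul_assoc]

lemma FT_inv {f : Eu d → ℂ} (hc : Continuous f) (hf : Integrable f) (hF : Integrable (FT f))
    (x : Eu d) : f x = (cd d : ℂ) * ∫ η, FT f η * Complex.exp ((⟪x, η⟫ : ℝ) * Complex.I) := by
  have hpi : (0 : ℝ) < 2 * Real.pi := by positivity
  have hcd : (cd d : ℂ) ≠ 0 := by exact_mod_cast cd_pos.ne'
  have h1 : (FourierTransform.fourier f : Eu d → ℂ) =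
      fun ξ => (cd d : ℂ)⁻¹ * FT f ((2 * Real.pi) • ξ) := by
    ext ξ
    rw [FT_eq_fourier, smul_smul, inv_mul_cancel₀ hpi.ne', one_smul, inv_mul_cancel_left₀ hcd]
  have h2 : Integrable (FourierTransform.fourier f : Eu d → ℂ) := by
    rw [h1]
    exact (hF.comp_smul hpi.ne').const_mul _
  have h3 := congrFun (hc.fourierInv_fourier_eq hf h2) x
  rw [← h3, Real.fourierInv_eq', h1]
  have h4 : (∫ v : Eu d, Complex.exp (↑(2 * Real.pi * ⟪v, x⟫) * Complex.I) •
      ((cd d : ℂ)⁻¹ * FT f ((2 * Real.pi) • v))) =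
      ∫ v : Eu d, (fun η => (cd d : ℂ)⁻¹ * (FT f η * Complex.exp ((⟪x, η⟫ : ℝ) * Complex.I)))
        ((2 * Real.pi) • v) := by
    apply integral_congr_ae
    filter_upwards with v
    simp only [inner_smul_right, smul_eq_mul, real_inner_comm]
    ring
  rw [h4, Measure.integral_comp_smul volume (fun η => (cd d : ℂ)⁻¹ *
    (FT f η * Complex.exp ((⟪x, η⟫ : ℝ) * Complex.I))), integral_const_mul, abs_of_pos (by positivity)]
  rw [← smul_mul_assoc, Complex.real_smul]
  congr 1
  rw [← Complex.ofReal_inv, ← Complex.ofReal_mul]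
  congr 1
  rw [finrank_euclideanSpace, Fintype.card_fin]
  have : cd d * cd d = ((2 * Real.pi) ^ d)⁻¹ := by
    unfold cd
    rw [← Real.rpow_add hpi, ← Real.rpow_natCast, ← Real.rpow_neg hpi.le]
    congr 1; ring
  rw [← this]
  field_simp [cd_pos.ne']

lemma FT_mul_of_repr {G g u : Eu d → ℂ} (hG : Integrable G)
    (hg : ∀ x, g x = ∫ η, G η * Complex.exp ((⟪x, η⟫ : ℝ) * Complex.I))
    (hu : Integrable u) (ξ : Eu d) :
    FT (fun x => g x * u x) ξ = ∫ η, G η * FT u (ξ - η) := by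
  have hInt : Integrable (fun z : Eu d × Eu d => G z.2 * u z.1 *
      Complex.exp (-(⟪z.1, ξ - z.2⟫ : ℝ) * Complex.I)) (volume.prod volume) := by
    have h0 : Integrable (fun z : Eu d × Eu d => G z.2 * u z.1) (volume.prod volume) := by
      have := (hu.mul_prod hG)
      simpa only [mul_comm] using this
    refine h0.mono ?_ (by filter_upwards with x; rw [norm_mul, norm_cexp, mul_one])
    refine h0.aestronglyMeasurable.mul (Continuous.aestronglyMeasurable ?_)
    fun_prop
  calc FT (fun x => g x * u x) ξ
      = (cd d : ℂ) * ∫ x, ∫ η, G η * u x * Complex.exp (-(⟪x, ξ - η⟫ : ℝ) * Complex.I) := by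
        rw [FT_def]
        congr 1
        apply integral_congr_ae
        filter_upwards with x
        rw [hg, mul_assoc, ← integral_mul_const]
        apply integral_congr_ae
        filter_upwards with η
        rw [inner_sub_right]
        have : Complex.exp (-((⟪x, ξ⟫ - ⟪x, η⟫ : ℝ) : ℂ) * Complex.I) =
          Complex.exp ((⟪x, η⟫ : ℝ) * Complex.I) * Complex.exp (-(⟪x, ξ⟫ : ℝ) * Complex.I) := by
          rw [← Complex.exp_add]; congr 1; push_cast; ring
        rw [this]; ring
    _ = (cd d : ℂ) * ∫ η, ∫ x, G η * u x * Complex.exp (-(⟪x, ξ - η⟫ : ℝ) * Complex.I) := by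
        rw [integral_integral_swap hInt]
    _ = ∫ η, G η * FT u (ξ - η) := by
        rw [← integral_const_mul]
        apply integral_congr_ae
        filter_upwards with η
        rw [FT_def, ← mul_assoc, mul_comm (G η), mul_assoc, ← integral_const_mul (G η)]
        simp only [mul_assoc]

lemma FT_mul {g u : Eu d → ℂ} (hc : Continuous g) (hg : Integrable g) (hG : Integrable (FT g))
    (hu : Integrable u) (ξ : Eu d) :
    FT (fun x => g x * u x) ξ = (cd d : ℂ) * ∫ η, FT g η * FT u (ξ - η) := by
  rw [FT_mul_of_repr (G := fun η => (cd d : ℂ) * FT g η) (hG.const_mul _) _ hu,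
    ← integral_const_mul]
  · simp only [mul_assoc]
  · intro x
    rw [FT_inv hc hg hG x, ← integral_const_mul]
    simp only [mul_assoc]

lemma FT_affine (f : Eu d → ℂ) (x0 : Eu d) {r : ℝ} (hr : 0 < r) (ξ : Eu d) :
    FT (fun x => f (r⁻¹ • (x - x0))) ξ =
      (r ^ d : ℝ) * (Complex.exp (-(⟪x0, ξ⟫ : ℝ) * Complex.I) * FT f (r • ξ)) := by
  simp only [FT_def]
  have h1 : (∫ x, f (r⁻¹ • (x - x0)) * Complex.exp (-(⟪x, ξ⟫ : ℝ) * Complex.I)) =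
     ∫ x, f (r⁻¹ • x) * Complex.exp (-(⟪x + x0, ξ⟫ : ℝ) * Complex.I) := by
    rw [← integral_add_right_eq_self _ x0]
    simp
  have h2 : (∫ x, f (r⁻¹ • x) * Complex.exp (-(⟪x + x0, ξ⟫ : ℝ) * Complex.I)) =
     ∫ x, (fun y => Complex.exp (-(⟪x0, ξ⟫ : ℝ) * Complex.I) *
       (f y * Complex.exp (-(⟪y, r • ξ⟫ : ℝ) * Complex.I))) (r⁻¹ • x) := by
    apply integral_congr_ae
    filter_upwards with x
    have : Complex.exp (-(⟪x + x0, ξ⟫ : ℝ) * Complex.I) =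
        Complex.exp (-(⟪x0, ξ⟫ : ℝ) * Complex.I) *
          Complex.exp (-(⟪r⁻¹ • x, r • ξ⟫ : ℝ) * Complex.I) := by
      rw [← Complex.exp_add, real_inner_smul_left, inner_smul_right, inv_mul_cancel_left₀ hr.ne',
        inner_add_left]
      congr 1; push_cast; ring
    rw [this]; ring
  rw [h1, h2, Measure.integral_comp_smul volume (fun y => Complex.exp (-(⟪x0, ξ⟫ : ℝ) * Complex.I) *
       (f y * Complex.exp (-(⟪y, r • ξ⟫ : ℝ) * Complex.I))), integral_const_mul, finrank_euclideanSpace,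
    Fintype.card_fin, Complex.real_smul, inv_pow, inv_inv, abs_of_pos (by positivity)]
  ring

lemma norm_FT_affine (f : Eu d → ℂ) (x0 : Eu d) {r : ℝ} (hr : 0 < r) (ξ : Eu d) :
    ‖FT (fun x => f (r⁻¹ • (x - x0))) ξ‖ = r ^ d * ‖FT f (r • ξ)‖ := by
  rw [FT_affine f x0 hr, norm_mul, norm_mul, norm_cexp, one_mul, Complex.norm_real,
    Real.norm_of_nonneg (by positivity)]


lemma w_add {p : ℝ} (hp : 0 ≤ p) (hp1 : p ≤ 1) (a b : Eu d) :
    ‖a + b‖ ^ p ≤ ‖a‖ ^ p + ‖b‖ ^ p :=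
  (Real.rpow_le_rpow (norm_nonneg _) (norm_add_le a b) hp).trans
    (by exact_mod_cast NNReal.rpow_add_le_add_rpow ‖a‖₊ ‖b‖₊ hp hp1)

lemma w_sub {p : ℝ} (hp : 0 ≤ p) (hp1 : p ≤ 1) (a b : Eu d) :
    ‖a‖ ^ p ≤ ‖a - b‖ ^ p + ‖b‖ ^ p := by
  simpa using w_add hp hp1 (a - b) b

lemma exp_decay_bound {c p : ℝ} (hc : 0 < c) (hp : 0 < p) (m : ℕ) :
    ∃ C : ℝ, 0 < C ∧ ∀ t : ℝ, 0 ≤ t → (1 + t) ^ m * Real.exp (-c * t ^ p) ≤ C := by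
  obtain ⟨n, hn⟩ := exists_nat_ge (m / p)
  have hmn : (m : ℝ) ≤ p * n := by
    rw [div_le_iff₀ hp] at hn; linarith
  refine ⟨2 ^ m * (1 + n.factorial / c ^ n), by positivity, fun t ht => ?_⟩
  set y := c * t ^ p with hy
  have hy0 : 0 ≤ y := by positivity
  have h1 : y ^ n / n.factorial ≤ Real.exp y := Real.pow_div_factorial_le_exp y hy0 n
  have h2 : 1 ≤ Real.exp y := Real.one_le_exp hy0
  have h3 : (1 + t) ^ m ≤ 2 ^ m * (1 + y ^ n / c ^ n) := by
    have hyn : y ^ n / c ^ n = t ^ (p * n) := by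
      rw [hy, mul_pow, mul_div_cancel_left₀ _ (by positivity), Real.rpow_mul ht,
        Real.rpow_natCast]
    rw [hyn]
    rcases le_total t 1 with h | h
    · calc (1 + t) ^ m ≤ 2 ^ m := by gcongr; linarith
        _ ≤ 2 ^ m * (1 + t ^ (p * n)) := by
          apply le_mul_of_one_le_right (by positivity)
          have : 0 ≤ t ^ (p * n) := by positivity
          linarith
    · calc (1 + t) ^ m ≤ (2 * t) ^ m := by gcongr; linarith
        _ = 2 ^ m * t ^ (m : ℝ) := by rw [mul_pow, Real.rpow_natCast]
        _ ≤ 2 ^ m * (1 + t ^ (p * n)) := by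
          gcongr
          have := Real.rpow_le_rpow_of_exponent_le h hmn
          linarith
  have h4 : y ^ n / c ^ n ≤ n.factorial / c ^ n * Real.exp y := by
    rw [div_mul_eq_mul_div]
    gcongr
    rwa [div_le_iff₀ (by positivity), mul_comm] at h1
  have hE : Real.exp (-c * t ^ p) = (Real.exp y)⁻¹ := by
    rw [← Real.exp_neg, hy]; congr 1; ring
  rw [hE, ← div_eq_mul_inv, div_le_iff₀ (by positivity)]
  calc (1 + t) ^ m ≤ 2 ^ m * (1 + y ^ n / c ^ n) := h3
    _ ≤ 2 ^ m * (Real.exp y + n.factorial / c ^ n * Real.exp y) := by gcongr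
    _ = _ := by ring

lemma continuous_w {p : ℝ} (hp : 0 < p) : Continuous (fun ξ : Eu d => ‖ξ‖ ^ p) :=
  continuous_norm.rpow_const (fun _ => Or.inr hp.le)

lemma integrable_exp_w_pow {c p : ℝ} (hc : 0 < c) (hp : 0 < p) (m : ℕ) :
    Integrable (fun ξ : Eu d => (1 + ‖ξ‖) ^ m * Real.exp (-c * ‖ξ‖ ^ p)) := by
  obtain ⟨C, hC, h⟩ := exp_decay_bound hc hp (m + (d + 1))
  have h1 : Integrable (fun ξ : Eu d => C * (1 + ‖ξ‖) ^ (-((d : ℝ) + 1))) := by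
    refine (integrable_one_add_norm ?_).const_mul C
    rw [finrank_euclideanSpace, Fintype.card_fin]; linarith
  have hcont := continuous_w (d := d) hp
  refine h1.mono' (Continuous.aestronglyMeasurable (by fun_prop)) ?_
  filter_upwards with ξ
  rw [Real.norm_of_nonneg (by positivity), Real.rpow_neg (by positivity)]
  have h2 := h ‖ξ‖ (norm_nonneg _)
  rw [← div_eq_mul_inv, le_div_iff₀ (by positivity)]
  have h3 : (1 + ‖ξ‖) ^ ((d : ℝ) + 1) = (1 + ‖ξ‖) ^ (d + 1) := by
    exact_mod_cast Real.rpow_natCast (1 + ‖ξ‖) (d + 1)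
  rw [h3]
  calc _ = (1 + ‖ξ‖) ^ (m + (d + 1)) * Real.exp (-c * ‖ξ‖ ^ p) := by ring
    _ ≤ C := h2

lemma integrable_exp_w {c p : ℝ} (hc : 0 < c) (hp : 0 < p) :
    Integrable (fun ξ : Eu d => Real.exp (-c * ‖ξ‖ ^ p)) := by
  simpa using integrable_exp_w_pow (d := d) hc hp 0

lemma memLp_exp_w {c p : ℝ} (hc : 0 < c) (hp : 0 < p) (q : ℝ≥0∞) (hq : 1 ≤ q) :
    MemLp (fun ξ : Eu d => Real.exp (-c * ‖ξ‖ ^ p)) q := by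
  have h1 : MemLp _ _ _ := memLp_one_iff_integrable.2 (integrable_exp_w (d := d) hc hp)
  have hcont := continuous_w (d := d) hp
  have h2 : MemLp (fun ξ : Eu d => Real.exp (-c * ‖ξ‖ ^ p)) ∞ := by
    refine memLp_top_of_bound (Continuous.aestronglyMeasurable (by fun_prop)) 1 ?_
    filter_upwards with ξ
    rw [Real.norm_of_nonneg (by positivity)]
    apply Real.exp_le_one_iff.2
    have : 0 ≤ ‖ξ‖ ^ p := by positivity
    nlinarith
  rcases eq_or_ne q ∞ with rfl | hq2
  · exact h2
  · have hq0 : q ≠ 0 := (zero_lt_one.trans_le hq).ne'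
    rw [← integrable_norm_rpow_iff h1.1 hq0 hq2]
    have hq' : 0 < q.toReal := ENNReal.toReal_pos hq0 hq2
    refine (integrable_exp_w (d := d) (mul_pos hc hq') hp).congr ?_
    filter_upwards with ξ
    rw [Real.norm_of_nonneg (by positivity), ← Real.exp_mul]
    congr 1; ring

lemma pow_compare {a b c N : ℝ} (ha : 0 < a) (hab : a < b) (hc : 0 < c) (hN : 0 < N) :
    ∃ C : ℝ, 0 ≤ C ∧ ∀ t : ℝ, 0 ≤ t → N * t ^ a ≤ c * t ^ b + C := by
  set T := (N / c) ^ (b - a)⁻¹ with hT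
  have hba : 0 < b - a := by linarith
  have hT0 : 0 < T := by positivity
  refine ⟨N * T ^ a, by positivity, fun t ht => ?_⟩
  rcases le_total t T with h | h
  · have : N * t ^ a ≤ N * T ^ a := by gcongr
    have : 0 ≤ c * t ^ b := by positivity
    linarith
  · have h1 : N / c ≤ t ^ (b - a) := by
      calc N / c = T ^ (b - a) := by
            rw [hT, ← Real.rpow_mul (by positivity), inv_mul_cancel₀ hba.ne', Real.rpow_one]
        _ ≤ _ := by gcongr
    have h2 : t ^ b = t ^ (b - a) * t ^ a := by
      rw [← Real.rpow_add (by linarith)]; congr 1; ring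
    have h3 : N ≤ c * t ^ (b - a) := by rwa [div_le_iff₀ hc, mul_comm] at h1
    have h4 : N * t ^ a ≤ c * t ^ (b - a) * t ^ a := by gcongr
    have : 0 ≤ N * T ^ a := by positivity
    rw [h2]; linarith


lemma exists_cone {Γ : Set (Eu d)} (ho : IsOpen Γ) (hΓ : IsCone Γ) {ξ0 : Eu d} (h0 : ξ0 ∈ Γ) :
    ∃ Γ' : Set (Eu d), IsOpen Γ' ∧ IsCone Γ' ∧ ξ0 ∈ Γ' ∧ ∃ c : ℝ, 0 < c ∧
      ∀ ξ ∈ Γ', ∀ η : Eu d, ξ - η ∉ Γ → c * ‖ξ‖ ≤ ‖η‖ := by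
  obtain ⟨δ, hδ, hball⟩ := Metric.isOpen_iff.1 ho ξ0 h0
  have hξ0 : ξ0 ≠ 0 := fun h => hΓ.1 (h ▸ h0)
  have hn : 0 < ‖ξ0‖ := norm_pos_iff.2 hξ0
  have hz : (0 : Eu d) ∉ Metric.ball ξ0 δ := fun h => hΓ.1 (hball h)
  have hδn : δ ≤ ‖ξ0‖ := by
    rw [Metric.mem_ball, dist_zero_left, not_lt] at hz; exact hz
  refine ⟨{ξ | ∃ t : ℝ, 0 < t ∧ t • ξ ∈ Metric.ball ξ0 (δ / 2)}, ?_, ⟨?_, ?_⟩, ?_,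
    δ / (4 * ‖ξ0‖), by positivity, ?_⟩
  · have : {ξ : Eu d | ∃ t : ℝ, 0 < t ∧ t • ξ ∈ Metric.ball ξ0 (δ / 2)} =
        ⋃ t : ℝ, ⋃ _ : 0 < t, (fun ξ : Eu d => t • ξ) ⁻¹' Metric.ball ξ0 (δ / 2) := by
      ext ξ; simp
    rw [this]
    exact isOpen_iUnion fun t => isOpen_iUnion fun _ =>
      Metric.isOpen_ball.preimage (continuous_const_smul t)
  · rintro ⟨t, ht, h⟩
    rw [smul_zero] at h
    exact hz (Metric.ball_subset_ball (by linarith) h)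
  · rintro ξ ⟨t, ht, h⟩ u hu
    refine ⟨t / u, by positivity, ?_⟩
    rwa [smul_smul, div_mul_cancel₀ _ hu.ne']
  · exact ⟨1, one_pos, by simpa using half_pos hδ⟩
  · rintro ξ ⟨t, ht, h⟩ η hη
    by_contra! hlt
    apply hη
    have h1 : t • (ξ - η) ∈ Metric.ball ξ0 δ := by
      rw [Metric.mem_ball, dist_eq_norm] at h ⊢
      have h2 : ‖t • ξ‖ ≤ 2 * ‖ξ0‖ := by
        have := norm_le_norm_add_norm_sub' (t • ξ) ξ0
        linarith
      have h3 : ‖t • η‖ < δ / 2 := by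
        rw [norm_smul, Real.norm_of_nonneg ht.le] at h2 ⊢
        calc t * ‖η‖ < t * (δ / (4 * ‖ξ0‖) * ‖ξ‖) := by gcongr
          _ = δ / (4 * ‖ξ0‖) * (t * ‖ξ‖) := by ring
          _ ≤ δ / (4 * ‖ξ0‖) * (2 * ‖ξ0‖) := by gcongr
          _ = δ / 2 := by field_simp; ring
      calc ‖t • (ξ - η) - ξ0‖ = ‖(t • ξ - ξ0) - t • η‖ := by rw [smul_sub]; congr 1; abel
        _ ≤ ‖t • ξ - ξ0‖ + ‖t • η‖ := norm_sub_le _ _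
        _ < δ := by linarith
    have := hΓ.2 _ (hball h1) t⁻¹ (by positivity)
    rwa [smul_smul, inv_mul_cancel₀ ht.ne', one_smul] at this

/-- decaying `FT` implies integrable -/
lemma integrable_FT_of_decay {g : Eu d → ℂ} (hg : Integrable g) {C ε p : ℝ} (hε : 0 < ε)
    (hp : 0 < p) (h : ∀ ξ, ‖FT g ξ‖ ≤ C * Real.exp (-ε * ‖ξ‖ ^ p)) : Integrable (FT g) :=
  ((integrable_exp_w hε hp).const_mul C).mono' (continuous_FT hg).aestronglyMeasurable
    (by filter_upwards with ξ using h ξ)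

/-- main convolution estimate on the cone -/
lemma cone_estimate {p : ℝ} (hp : 0 < p) (hp1 : p ≤ 1) {Γ Γ' : Set (Eu d)}
    (ho : IsOpen Γ) {c : ℝ} (hc : 0 < c)
    (hcone : ∀ ξ ∈ Γ', ∀ η : Eu d, ξ - η ∉ Γ → c * ‖ξ‖ ≤ ‖η‖)
    {u : Eu d → ℂ} (hu : Integrable u) {k : ℝ} (hk : 0 < k)
    (hInt : IntegrableOn (fun ξ => ‖FT u ξ‖ * Real.exp (k * ‖ξ‖ ^ p)) Γ) {ε C : ℝ} (hε : 0 < ε)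
    (hC : 0 < C) :
    ∃ C' κ : ℝ, 0 < C' ∧ 0 < κ ∧ ∀ g : Eu d → ℂ, Continuous g → Integrable g →
      (∀ ξ, ‖FT g ξ‖ ≤ C * Real.exp (-ε * ‖ξ‖ ^ p)) →
      ∀ ξ ∈ Γ', ‖FT (fun x => g x * u x) ξ‖ ≤ C' * Real.exp (-κ * ‖ξ‖ ^ p) := by
  set κ := min (min ε k) (ε / 2 * c ^ p) with hκ
  have hκ0 : 0 < κ := by positivity
  have hκ1 : κ ≤ ε := (min_le_left _ _).trans (min_le_left _ _)
  have hκ2 : κ ≤ k := (min_le_left _ _).trans (min_le_right _ _)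
  have hκ3 : κ ≤ ε / 2 * c ^ p := min_le_right _ _
  set B := cd d * ∫ x, ‖u x‖ with hB
  have hB0 : 0 ≤ B := mul_nonneg cd_pos.le (integral_nonneg fun _ => norm_nonneg _)
  set Φ : Eu d → ℝ := Γ.indicator (fun ξ => ‖FT u ξ‖ * Real.exp (k * ‖ξ‖ ^ p)) with hΦ
  have hΦi : Integrable Φ := hInt.integrable_indicator ho.measurableSet
  have hΦ0 : ∀ ξ, 0 ≤ Φ ξ := fun ξ => indicator_nonneg (fun _ _ => by positivity) _
  set J := (∫ ξ, Φ ξ) + B * ∫ ξ : Eu d, Real.exp (-(ε / 2) * ‖ξ‖ ^ p) with hJ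
  have hJ0 : 0 ≤ J := add_nonneg (integral_nonneg hΦ0)
    (mul_nonneg hB0 (integral_nonneg fun _ => by positivity))
  refine ⟨cd d * C * (J + 1), κ, mul_pos (mul_pos cd_pos hC) (by linarith), hκ0, ?_⟩
  intro g hgc hgi hg ξ hξ
  rw [FT_mul hgc hgi (integrable_FT_of_decay hgi hε hp hg) hu, norm_mul, Complex.norm_real,
    Real.norm_of_nonneg cd_pos.le]
  have hpt : ∀ η, ‖FT g η * FT u (ξ - η)‖ ≤ C * Real.exp (-κ * ‖ξ‖ ^ p) *
      (Φ (ξ - η) + B * Real.exp (-(ε / 2) * ‖η‖ ^ p)) := by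
    intro η
    rw [norm_mul]
    have hw := w_sub hp.le hp1 ξ η
    have hη0 : 0 ≤ ‖η‖ ^ p := by positivity
    have hξη0 : 0 ≤ ‖ξ - η‖ ^ p := by positivity
    have hξ0 : 0 ≤ ‖ξ‖ ^ p := by positivity
    by_cases h : ξ - η ∈ Γ
    · have h1 : Φ (ξ - η) = ‖FT u (ξ - η)‖ * Real.exp (k * ‖ξ - η‖ ^ p) := by
        rw [hΦ, indicator_of_mem h]
      calc ‖FT g η‖ * ‖FT u (ξ - η)‖ ≤ C * Real.exp (-ε * ‖η‖ ^ p) * ‖FT u (ξ - η)‖ := by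
            gcongr; exact hg η
        _ ≤ C * Real.exp (-κ * ‖ξ‖ ^ p + k * ‖ξ - η‖ ^ p) * ‖FT u (ξ - η)‖ := by
            gcongr
            nlinarith
        _ = C * Real.exp (-κ * ‖ξ‖ ^ p) * Φ (ξ - η) := by
            rw [h1, Real.exp_add]; ring
        _ ≤ _ := by
            gcongr
            have : 0 ≤ B * Real.exp (-(ε / 2) * ‖η‖ ^ p) := by positivity
            linarith
    · have h1 : c ^ p * ‖ξ‖ ^ p ≤ ‖η‖ ^ p := by
        rw [← Real.mul_rpow hc.le (norm_nonneg _)]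
        exact Real.rpow_le_rpow (by positivity) (hcone ξ hξ η h) hp.le
      calc ‖FT g η‖ * ‖FT u (ξ - η)‖ ≤ C * Real.exp (-ε * ‖η‖ ^ p) * B := by
            gcongr
            · exact hg η
            · exact norm_FT_le _ _
        _ ≤ C * Real.exp (-κ * ‖ξ‖ ^ p + -(ε / 2) * ‖η‖ ^ p) * B := by
            gcongr
            have h2 : κ * ‖ξ‖ ^ p ≤ ε / 2 * c ^ p * ‖ξ‖ ^ p := by gcongr
            have h3 : ε / 2 * (c ^ p * ‖ξ‖ ^ p) ≤ ε / 2 * ‖η‖ ^ p := by gcongr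
            linarith
        _ = C * Real.exp (-κ * ‖ξ‖ ^ p) * (B * Real.exp (-(ε / 2) * ‖η‖ ^ p)) := by
            rw [Real.exp_add]; ring
        _ ≤ _ := by
            gcongr
            have := hΦ0 (ξ - η)
            linarith
  have hi1 : Integrable (fun η => Φ (ξ - η)) := hΦi.comp_sub_left ξ
  have hi2 : Integrable (fun η : Eu d => B * Real.exp (-(ε / 2) * ‖η‖ ^ p)) :=
    (integrable_exp_w (half_pos hε) hp).const_mul B
  have hfin : ‖∫ η, FT g η * FT u (ξ - η)‖ ≤ C * Real.exp (-κ * ‖ξ‖ ^ p) * J := by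
    refine (norm_integral_le_of_norm_le ((hi1.add hi2).const_mul
      (C * Real.exp (-κ * ‖ξ‖ ^ p))) (by filter_upwards with η using hpt η)).trans (le_of_eq ?_)
    rw [integral_const_mul]
    congr 1
    have := integral_add hi1 hi2
    simp only [Pi.add_apply]
    rw [this, integral_const_mul, integral_sub_left_eq_self (fun η => Φ η)]
  calc cd d * ‖∫ η, FT g η * FT u (ξ - η)‖ ≤ cd d * (C * Real.exp (-κ * ‖ξ‖ ^ p) * (J + 1)) := by
        have := cd_pos (d := d)
        gcongr
        refine hfin.trans ?_
        gcongr
        linarith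
    _ = _ := by ring

/-- multiplication by a function with small weighted Fourier norm -/
lemma mul_estimate {p ε : ℝ} (hp : 0 < p) (hp1 : p ≤ 1) (hε : 0 < ε) {h v : Eu d → ℂ}
    (hc : Continuous h) (hh : Integrable h)
    (hH : Integrable (fun ξ => ‖FT h ξ‖ * Real.exp (ε * ‖ξ‖ ^ p)))
    (hv : Integrable v) {C : ℝ}
    (hvC : ∀ ξ, ‖FT v ξ‖ ≤ C * Real.exp (-ε * ‖ξ‖ ^ p)) (ξ : Eu d) :
    ‖FT (fun x => h x * v x) ξ‖ ≤
      (cd d * ∫ ξ, ‖FT h ξ‖ * Real.exp (ε * ‖ξ‖ ^ p)) * C * Real.exp (-ε * ‖ξ‖ ^ p) := by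
  have hHi : Integrable (FT h) := by
    refine hH.mono' (continuous_FT hh).aestronglyMeasurable ?_
    filter_upwards with ξ
    apply le_mul_of_one_le_right (norm_nonneg _)
    apply Real.one_le_exp; positivity
  have hC0 : 0 ≤ C := by
    have h1 := (norm_nonneg _).trans (hvC 0)
    exact nonneg_of_mul_nonneg_left h1 (Real.exp_pos _)
  rw [FT_mul hc hh hHi hv, norm_mul, Complex.norm_real, Real.norm_of_nonneg cd_pos.le]
  have hcd := (cd_pos (d := d)).le
  have : ‖∫ η, FT h η * FT v (ξ - η)‖ ≤
      (∫ ξ, ‖FT h ξ‖ * Real.exp (ε * ‖ξ‖ ^ p)) * (C * Real.exp (-ε * ‖ξ‖ ^ p)) := by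
    rw [← integral_mul_const]
    refine norm_integral_le_of_norm_le (hH.mul_const _) ?_
    filter_upwards with η
    rw [norm_mul]
    have hw := w_sub hp.le hp1 ξ η
    calc ‖FT h η‖ * ‖FT v (ξ - η)‖ ≤ ‖FT h η‖ * (C * Real.exp (-ε * ‖ξ - η‖ ^ p)) := by
          gcongr; exact hvC _
      _ ≤ ‖FT h η‖ * (C * Real.exp (ε * ‖η‖ ^ p + -ε * ‖ξ‖ ^ p)) := by
          gcongr; nlinarith
      _ = _ := by rw [Real.exp_add]; ring
  calc _ ≤ cd d * ((∫ ξ, ‖FT h ξ‖ * Real.exp (ε * ‖ξ‖ ^ p)) * (C * Real.exp (-ε * ‖ξ‖ ^ p))) := by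
        gcongr
    _ = _ := by ring


lemma FT_decay_one {f : Eu d → ℂ} (h1 : ContDiff ℝ (⊤ : ℕ∞) f) (h2 : HasCompactSupport f) :
    ∃ A : ℝ, 0 < A ∧ ∀ ξ, ‖ξ‖ * ‖FT f ξ‖ ≤ A := by
  obtain ⟨A, hA, h⟩ := (FourierTransform.fourier (h2.toSchwartzMap h1)).decay 1 0
  have hpi : (0 : ℝ) < 2 * Real.pi := by positivity
  have hcd := cd_pos (d := d)
  refine ⟨cd d * (2 * Real.pi) * A, by positivity, fun ξ => ?_⟩
  have h3 := h ((2 * Real.pi)⁻¹ • ξ)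
  rw [norm_iteratedFDeriv_zero, pow_one, SchwartzMap.fourier_coe, norm_smul,
    Real.norm_of_nonneg (by positivity)] at h3
  have h4 : (h2.toSchwartzMap h1 : Eu d → ℂ) = f := rfl
  rw [h4] at h3
  rw [FT_eq_fourier, norm_mul, Complex.norm_real, Real.norm_of_nonneg hcd.le]
  calc _ = cd d * (2 * Real.pi) * ((2 * Real.pi)⁻¹ * ‖ξ‖ *
        ‖FourierTransform.fourier f ((2 * Real.pi)⁻¹ • ξ)‖) := by field_simp
    _ ≤ _ := by gcongr

/-- properties of an averaging kernel -/
structure IsKer (κ : Eu d → ℂ) : Prop where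
  smooth : ContDiff ℝ (⊤ : ℕ∞) κ
  supp : ∀ t, 1 ≤ ‖t‖ → κ t = 0
  int_norm : ∫ t, ‖κ t‖ = 1
  int_one : ∫ t, κ t = 1

lemma exists_ker : ∃ κ : Eu d → ℂ, IsKer κ := by
  let b : ContDiffBump (0 : Eu d) := ⟨1 / 2, 1, by norm_num, by norm_num⟩
  refine ⟨fun x => ((b.normed volume x : ℝ) : ℂ), ?_, ?_, ?_, ?_⟩
  · exact Complex.ofRealCLM.contDiff.comp b.contDiff_normed
  · intro t ht
    have : t ∉ Function.support (b.normed volume) := by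
      rw [b.support_normed_eq]; simpa using ht
    simpa using this
  · simp only [Complex.norm_real, Real.norm_of_nonneg (b.nonneg_normed _)]
    exact b.integral_normed
  · rw [integral_complex_ofReal, b.integral_normed]; simp

lemma IsKer.compact {κ : Eu d → ℂ} (h : IsKer κ) : HasCompactSupport κ :=
  HasCompactSupport.intro (isCompact_closedBall (0 : Eu d) 1) fun x hx => h.supp x (by
    simp at hx; exact hx.le)

lemma IsKer.integrable {κ : Eu d → ℂ} (h : IsKer κ) : Integrable κ :=
  h.smooth.continuous.integrable_of_hasCompactSupport h.compact

/-- averaging -/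
def Avg (κ : Eu d → ℂ) (a : ℝ) (p : Eu d → ℂ) (x : Eu d) : ℂ := ∫ t, κ t * p (x - a • t)

lemma avg_integrable {κ : Eu d → ℂ} (h : IsKer κ) (a : ℝ) {p : Eu d → ℂ} (hp : Continuous p)
    (x : Eu d) : Integrable (fun t => κ t * p (x - a • t)) := by
  have := h.smooth.continuous
  refine Continuous.integrable_of_hasCompactSupport (by fun_prop) ?_
  exact h.compact.mul_right

/-- The basic bound: differences of averages. -/
lemma avg_bound {κ : Eu d → ℂ} (h : IsKer κ) {B : ℝ} (_hB : 0 ≤ B) {F : Eu d → ℂ}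
    (hF : ∀ t, ‖t‖ ≤ 1 → ‖F t‖ ≤ B) : ‖∫ t, κ t * F t‖ ≤ B := by
  have : ‖∫ t, κ t * F t‖ ≤ ∫ t, ‖κ t‖ * B := by
    refine norm_integral_le_of_norm_le (h.integrable.norm.mul_const B) ?_
    filter_upwards with t
    rw [norm_mul]
    rcases le_total 1 ‖t‖ with h1 | h1
    · simp [h.supp t h1]
    · gcongr; exact hF t h1
  rwa [integral_mul_const, h.int_norm, one_mul] at this

lemma avg_lip {κ : Eu d → ℂ} (h : IsKer κ) (a : ℝ) {p : Eu d → ℂ} (hp : Continuous p) {L : ℝ≥0}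
    (hL : LipschitzWith L p) : LipschitzWith L (Avg κ a p) := by
  apply LipschitzWith.of_dist_le_mul
  intro x y
  unfold Avg
  rw [dist_eq_norm, ← integral_sub (avg_integrable h a hp x) (avg_integrable h a hp y)]
  simp only [← mul_sub]
  apply avg_bound h (by positivity)
  intro t _
  have := hL.dist_le_mul (x - a • t) (y - a • t)
  rwa [dist_eq_norm, dist_sub_right] at this

lemma avg_near {κ : Eu d → ℂ} (h : IsKer κ) {a : ℝ} (ha : 0 ≤ a) {p : Eu d → ℂ}
    (hp : Continuous p) (x : Eu d) (c : ℂ) {B : ℝ} (hB : 0 ≤ B)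
    (hy : ∀ y, ‖y - x‖ ≤ a → ‖p y - c‖ ≤ B) : ‖Avg κ a p x - c‖ ≤ B := by
  have h1 : c = ∫ t, κ t * c := by rw [integral_mul_const, h.int_one, one_mul]
  unfold Avg
  rw [h1, ← integral_sub (avg_integrable h a hp x) (h.integrable.mul_const c)]
  simp only [← mul_sub]
  apply avg_bound h hB
  intro t ht
  apply hy
  have h2 : x - a • t - x = -(a • t) := by abel
  rw [h2, norm_neg, norm_smul, Real.norm_of_nonneg ha]
  exact mul_le_of_le_one_right ha ht

lemma FT_avg {κ : Eu d → ℂ} (h : IsKer κ) (a : ℝ) {p : Eu d → ℂ} (hp : Continuous p)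
    (hc : HasCompactSupport p) (ξ : Eu d) :
    FT (Avg κ a p) ξ = ((cd d : ℂ)⁻¹ * FT κ (a • ξ)) * FT p ξ := by
  have hκ := h.smooth.continuous
  have hcd : (cd d : ℂ) ≠ 0 := by exact_mod_cast cd_pos.ne'
  have hInt : Integrable (fun z : Eu d × Eu d => κ z.2 * p (z.1 - a • z.2) *
      Complex.exp (-(⟪z.1, ξ⟫ : ℝ) * Complex.I)) (volume.prod volume) := by
    obtain ⟨R, hR⟩ := hc.isCompact.isBounded.subset_closedBall (0 : Eu d)
    refine Continuous.integrable_of_hasCompactSupport (by fun_prop) ?_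
    refine HasCompactSupport.intro ((isCompact_closedBall (0 : Eu d) (R + |a|)).prod
      (isCompact_closedBall (0 : Eu d) 1)) ?_
    rintro ⟨x, t⟩ hxt
    simp only
    by_cases ht : κ t = 0
    · simp [ht]
    have ht1 : ‖t‖ ≤ 1 := by
      by_contra! h1
      exact ht (h.supp t h1.le)
    by_cases hq : p (x - a • t) = 0
    · simp [hq]
    exfalso
    apply hxt
    have h2 : x - a • t ∈ Metric.closedBall (0 : Eu d) R := hR (subset_tsupport _ hq)
    simp only [mem_prod, Metric.mem_closedBall, dist_zero_right] at h2 ⊢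
    refine ⟨?_, ht1⟩
    have h3 : ‖a • t‖ ≤ |a| := by
      rw [norm_smul, Real.norm_eq_abs]
      exact mul_le_of_le_one_right (abs_nonneg a) ht1
    have := norm_le_norm_add_norm_sub' x (a • t)
    linarith
  have hinner : ∀ t, (∫ x, κ t * p (x - a • t) * Complex.exp (-(⟪x, ξ⟫ : ℝ) * Complex.I)) =
      κ t * Complex.exp (-(⟪t, a • ξ⟫ : ℝ) * Complex.I) *
        ∫ x, p x * Complex.exp (-(⟪x, ξ⟫ : ℝ) * Complex.I) := by
    intro t
    rw [← integral_add_right_eq_self _ (a • t), ← integral_const_mul]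
    apply integral_congr_ae
    filter_upwards with x
    have : Complex.exp (-(⟪x + a • t, ξ⟫ : ℝ) * Complex.I) =
        Complex.exp (-(⟪t, a • ξ⟫ : ℝ) * Complex.I) *
          Complex.exp (-(⟪x, ξ⟫ : ℝ) * Complex.I) := by
      rw [← Complex.exp_add, inner_add_left, real_inner_smul_left, inner_smul_right]
      congr 1; push_cast; ring
    rw [this, add_sub_cancel_right]; ring
  rw [FT_def, FT_def κ, FT_def p, inv_mul_cancel_left₀ hcd, mul_left_comm]
  congr 1
  unfold Avg
  simp only [← integral_mul_const]
  rw [integral_integral_swap hInt]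
  simp only [hinner]


lemma prod_bound {δ A σ t : ℝ} (hδ : 0 < δ) (hA : 0 < A) (hσ : 0 < σ) (ht : 0 ≤ t)
    {μ : ℕ → ℝ} (h0 : ∀ j, 0 ≤ μ j) (h1 : ∀ j, μ j ≤ 1)
    (hμ : ∀ j : ℕ, δ / ((j : ℝ) + 1) ^ σ * t * μ j ≤ A) :
    ∃ J : ℕ, ∀ n, J ≤ n → ∏ j ∈ Finset.range n, μ j ≤
      Real.exp 1 * Real.exp (-(δ / (Real.exp 1 * A)) ^ (1 / σ) * t ^ (1 / σ)) := by
  set y := (δ / (Real.exp 1 * A) * t) ^ (1 / σ) with hy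
  have hy0 : 0 ≤ y := by positivity
  have hy' : y = (δ / (Real.exp 1 * A)) ^ (1 / σ) * t ^ (1 / σ) :=
    Real.mul_rpow (by positivity) ht
  refine ⟨⌊y⌋₊, fun n hn => ?_⟩
  have hj : ∀ j ∈ Finset.range ⌊y⌋₊, μ j ≤ Real.exp (-1) := by
    intro j hj
    rw [Finset.mem_range] at hj
    have h2 : ((j : ℝ) + 1) ≤ y := by
      have h3 : ((j + 1 : ℕ) : ℝ) ≤ y := (Nat.le_floor_iff hy0).1 hj
      exact_mod_cast h3
    have h3 : ((j : ℝ) + 1) ^ σ ≤ δ / (Real.exp 1 * A) * t := by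
      calc ((j : ℝ) + 1) ^ σ ≤ y ^ σ := by gcongr
        _ = _ := by
          rw [hy, ← Real.rpow_mul (by positivity), one_div, inv_mul_cancel₀ hσ.ne', Real.rpow_one]
    have h4 : 0 < ((j : ℝ) + 1) ^ σ := by positivity
    have h5 := hμ j
    have h6 : Real.exp 1 * A ≤ δ / ((j : ℝ) + 1) ^ σ * t := by
      rw [div_mul_eq_mul_div, le_div_iff₀ h4]
      rw [div_mul_eq_mul_div, le_div_iff₀ (by positivity)] at h3
      linarith
    have h7 : Real.exp 1 * A * μ j ≤ A := (by gcongr; exact h0 j : _ ≤ _).trans h5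
    rw [Real.exp_neg, ← one_div, le_div_iff₀ (by positivity)]
    have h8 : A * (μ j * Real.exp 1) ≤ A * 1 := by linarith
    exact le_of_mul_le_mul_left h8 hA
  calc ∏ j ∈ Finset.range n, μ j ≤ ∏ j ∈ Finset.range ⌊y⌋₊, μ j := by
        have hanti : Antitone (fun n => ∏ j ∈ Finset.range n, μ j) := by
          apply antitone_nat_of_succ_le
          intro n
          rw [Finset.prod_range_succ]
          exact mul_le_of_le_one_right (Finset.prod_nonneg fun j _ => h0 j) (h1 n)
        exact hanti hn
    _ ≤ ∏ j ∈ Finset.range ⌊y⌋₊, Real.exp (-1) := Finset.prod_le_prod (fun j _ => h0 j) hj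
    _ = Real.exp (-⌊y⌋₊) := by
        rw [Finset.prod_const, Finset.card_range, ← Real.exp_nat_mul]; congr 1; ring
    _ ≤ Real.exp (1 + -y) := by
        gcongr
        have := Nat.lt_floor_add_one y
        linarith
    _ = _ := by rw [Real.exp_add, hy']; congr 2; ring

/-- iterated averages -/
def pseq (κ b : Eu d → ℂ) (a : ℕ → ℝ) : ℕ → Eu d → ℂ
  | 0 => b
  | n + 1 => Avg κ (a n) (pseq κ b a n)

lemma smooth_of_decay {f : Eu d → ℂ} (hc : Continuous f) (hf : Integrable f) {C c p : ℝ}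
    (hcp : 0 < c) (hp : 0 < p) (h : ∀ ξ, ‖FT f ξ‖ ≤ C * Real.exp (-c * ‖ξ‖ ^ p)) :
    ContDiff ℝ (⊤ : ℕ∞) f := by
  have hF := integrable_FT_of_decay hf hcp hp h
  have h1 : f = fun x => FT (FT f) (-x) := by
    ext x
    rw [FT_inv hc hf hF x, FT_def]
    congr 1
    apply integral_congr_ae
    filter_upwards with η
    rw [inner_neg_right, real_inner_comm]
    push_cast
    rw [neg_neg]
  rw [h1]
  simp only [FT_eq_fourier (FT f)]
  have h2 : ContDiff ℝ (⊤ : ℕ∞) (FourierTransform.fourier (FT f) : Eu d → ℂ) := by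
    apply Real.contDiff_fourier
    intro n _
    have h3 := continuous_FT hf
    refine ((integrable_exp_w_pow (d := d) hcp hp n).const_mul C).mono'
      (Continuous.aestronglyMeasurable (by fun_prop)) ?_
    filter_upwards with ξ
    rw [norm_mul, norm_norm, norm_pow, norm_norm]
    calc ‖ξ‖ ^ n * ‖FT f ξ‖ ≤ (1 + ‖ξ‖) ^ n * (C * Real.exp (-c * ‖ξ‖ ^ p)) := by
          gcongr
          · linarith
          · exact h ξ
      _ = _ := by ring
  exact contDiff_const.mul (h2.comp (contDiff_neg.const_smul _))

lemma exists_bump {s : ℝ} (hs : 1 < s) : ∃ χ : Eu d → ℂ, IsSCutoff s χ ∧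
    (∀ x, ‖x‖ ≤ 1 → χ x = 1) ∧ ∀ x, 4 ≤ ‖x‖ → χ x = 0 := by
  obtain ⟨κ, hκ⟩ := exists_ker (d := d)
  obtain ⟨A', hA', hdec⟩ := FT_decay_one hκ.smooth hκ.compact
  have hcd := cd_pos (d := d)
  set A := (cd d)⁻¹ * A' with hA
  have hA0 : 0 < A := by positivity
  set σ := (1 + s) / 2 with hσ
  have hσ1 : 1 < σ := by rw [hσ]; linarith
  have hσs : σ < s := by rw [hσ]; linarith
  -- the step sizes
  have hsum0 : Summable (fun n : ℕ => 1 / ((n : ℝ) + 1) ^ σ) := by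
    have := (summable_nat_add_iff 1).2 (Real.summable_one_div_nat_rpow.2 hσ1)
    exact_mod_cast this
  set S := ∑' n : ℕ, 1 / ((n : ℝ) + 1) ^ σ with hS
  have hS0 : 0 ≤ S := tsum_nonneg fun n => by positivity
  set δ := 1 / (S + 1) with hδ
  have hδ0 : 0 < δ := by positivity
  set a : ℕ → ℝ := fun n => δ / ((n : ℝ) + 1) ^ σ with ha
  have ha0 : ∀ n, 0 ≤ a n := fun n => by positivity
  have hasum : Summable a := by
    have := hsum0.mul_left δ
    simpa only [mul_one_div] using this
  have ha1 : ∀ n, ∑ j ∈ Finset.range n, a j ≤ 1 := by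
    intro n
    calc ∑ j ∈ Finset.range n, a j ≤ ∑' j, a j := hasum.sum_le_tsum _ (fun j _ => ha0 j)
      _ = δ * S := by
        rw [hS, ← tsum_mul_left]; simp only [ha, mul_one_div]
      _ ≤ 1 := by
        rw [hδ, one_div_mul_eq_div, div_le_one (by positivity)]; linarith
  -- the initial bump
  let b0 : ContDiffBump (0 : Eu d) := ⟨2, 3, by norm_num, by norm_num⟩
  set b : Eu d → ℂ := fun x => ((b0 x : ℝ) : ℂ) with hb
  have hbs : ContDiff ℝ (⊤ : ℕ∞) b := Complex.ofRealCLM.contDiff.comp b0.contDiff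
  have hb1 : ∀ x, ‖x‖ ≤ 2 → b x = 1 := by
    intro x hx
    have : b0 x = 1 := b0.one_of_mem_closedBall (by simpa using hx)
    simp [hb, this]
  have hb0 : ∀ x, 3 ≤ ‖x‖ → b x = 0 := by
    intro x hx
    have : b0 x = 0 := b0.zero_of_le_dist (by simpa using hx)
    simp [hb, this]
  have hbn : ∀ x, ‖b x‖ ≤ 1 := by
    intro x
    rw [hb, Complex.norm_real, Real.norm_of_nonneg b0.nonneg]
    exact b0.le_one
  have hbc : HasCompactSupport b := HasCompactSupport.intro (isCompact_closedBall (0 : Eu d) 3)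
    fun x hx => hb0 x (by simp at hx; exact hx.le)
  obtain ⟨L, hL⟩ := ContDiff.lipschitzWith_of_hasCompactSupport hbc hbs (by simp)
  set P := pseq κ b a with hP
  have hPs : ∀ n, P (n + 1) = Avg κ (a n) (P n) := fun n => rfl
  have hlip : ∀ n, LipschitzWith L (P n) := by
    intro n
    induction n with
    | zero => exact hL
    | succ n ih => rw [hPs]; exact avg_lip hκ _ ih.continuous ih
  have hcont : ∀ n, Continuous (P n) := fun n => (hlip n).continuous
  have hP1 : ∀ n x, ‖x‖ ≤ 2 - ∑ j ∈ Finset.range n, a j → P n x = 1 := by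
    intro n
    induction n with
    | zero => intro x hx; exact hb1 x (by simpa using hx)
    | succ n ih =>
      intro x hx
      rw [Finset.sum_range_succ] at hx
      have := avg_near hκ (ha0 n) (hcont n) x 1 le_rfl (fun y hy => by
        rw [ih y, sub_self, norm_zero]
        have := norm_le_norm_add_norm_sub' y x
        linarith)
      rw [hPs]
      exact sub_eq_zero.1 (norm_le_zero_iff.1 this)
  have hP0 : ∀ n x, 3 + ∑ j ∈ Finset.range n, a j ≤ ‖x‖ → P n x = 0 := by
    intro n
    induction n with
    | zero => intro x hx; exact hb0 x (by simpa using hx)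
    | succ n ih =>
      intro x hx
      rw [Finset.sum_range_succ] at hx
      have := avg_near hκ (ha0 n) (hcont n) x 0 le_rfl (fun y hy => by
        rw [ih y, sub_self, norm_zero]
        have := norm_le_norm_add_norm_sub y x
        linarith)
      rw [hPs]
      exact sub_eq_zero.1 (norm_le_zero_iff.1 this)
  have hP1' : ∀ n x, ‖x‖ ≤ 1 → P n x = 1 := fun n x hx => hP1 n x (by linarith [ha1 n])
  have hP0' : ∀ n x, 4 ≤ ‖x‖ → P n x = 0 := fun n x hx => hP0 n x (by linarith [ha1 n])
  have hPn : ∀ n x, ‖P n x‖ ≤ 1 := by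
    intro n
    induction n with
    | zero => exact hbn
    | succ n ih =>
      intro x
      have := avg_near hκ (ha0 n) (hcont n) x 0 zero_le_one (fun y hy => by
        rw [sub_zero]; exact ih y)
      rw [hPs]
      rwa [sub_zero] at this
  have hPc : ∀ n, HasCompactSupport (P n) := fun n =>
    HasCompactSupport.intro (isCompact_closedBall (0 : Eu d) 4)
      fun x hx => hP0' n x (by simp at hx; exact hx.le)
  have hcau : ∀ x, CauchySeq (fun n => P n x) := by
    intro x
    refine cauchySeq_of_dist_le_of_summable (fun n => L * a n) (fun n => ?_) (hasum.mul_left _)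
    rw [dist_comm, dist_eq_norm]
    have := avg_near hκ (ha0 n) (hcont n) x (P n x) (B := L * a n)
      (mul_nonneg L.2 (ha0 n)) (fun y hy => by
        have := (hlip n).dist_le_mul y x
        rw [dist_eq_norm, dist_eq_norm] at this
        exact this.trans (by gcongr))
    exact this
  choose χ hχ using fun x => cauchySeq_tendsto_of_complete (hcau x)
  have hχ1 : ∀ x, ‖x‖ ≤ 1 → χ x = 1 := fun x hx =>
    tendsto_nhds_unique (hχ x) (by simp only [hP1' _ x hx]; exact tendsto_const_nhds)
  have hχ0 : ∀ x, 4 ≤ ‖x‖ → χ x = 0 := fun x hx =>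
    tendsto_nhds_unique (hχ x) (by simp only [hP0' _ x hx]; exact tendsto_const_nhds)
  have hχL : LipschitzWith L χ := by
    apply LipschitzWith.of_dist_le_mul
    intro x y
    exact le_of_tendsto ((hχ x).dist (hχ y))
      (Filter.Eventually.of_forall fun n => (hlip n).dist_le_mul x y)
  have hχc : HasCompactSupport χ := HasCompactSupport.intro (isCompact_closedBall (0 : Eu d) 4)
      fun x hx => hχ0 x (by simp at hx; exact hx.le)
  have hχi : Integrable χ := hχL.continuous.integrable_of_hasCompactSupport hχc
  have hFTlim : ∀ ξ, Filter.Tendsto (fun n => FT (P n) ξ) Filter.atTop (nhds (FT χ ξ)) := by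
    intro ξ
    simp only [FT_def]
    refine Filter.Tendsto.const_mul _ ?_
    refine tendsto_integral_of_dominated_convergence
      ((Metric.closedBall (0 : Eu d) 4).indicator fun _ => (1 : ℝ)) ?_ ?_ ?_ ?_
    · intro n
      have := hcont n
      exact Continuous.aestronglyMeasurable (by fun_prop)
    · refine (integrable_indicator_iff Metric.isClosed_closedBall.measurableSet).2 ?_
      exact integrableOn_const (isCompact_closedBall (0 : Eu d) 4).measure_lt_top.ne
    · intro n
      filter_upwards with x
      rw [norm_mul, norm_cexp, mul_one]
      by_cases hx : x ∈ Metric.closedBall (0 : Eu d) 4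
      · rw [indicator_of_mem hx]; exact hPn n x
      · rw [indicator_of_notMem hx, hP0' n x (by simp at hx; exact hx.le), norm_zero]
    · filter_upwards with x
      exact (hχ x).mul_const _
  set B := cd d * ∫ x, ‖b x‖ with hB
  have hB0 : 0 ≤ B := mul_nonneg hcd.le (integral_nonneg fun _ => norm_nonneg _)
  have hFT : ∀ ξ n, ‖FT (P n) ξ‖ ≤ B * ∏ j ∈ Finset.range n, ((cd d)⁻¹ * ‖FT κ (a j • ξ)‖) := by
    intro ξ n
    induction n with
    | zero =>
      rw [Finset.prod_range_zero, mul_one]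
      exact norm_FT_le b ξ
    | succ n ih =>
      rw [hPs, FT_avg hκ _ (hcont n) (hPc n), Finset.prod_range_succ, norm_mul, norm_mul, norm_inv,
        Complex.norm_real, Real.norm_of_nonneg hcd.le, mul_comm, ← mul_assoc B]
      gcongr
  set c0 := (δ / (Real.exp 1 * A)) ^ (1 / σ) with hc0
  have hc00 : 0 < c0 := by positivity
  have hdecay : ∀ ξ, ‖FT χ ξ‖ ≤ B * Real.exp 1 * Real.exp (-c0 * ‖ξ‖ ^ (1 / σ)) := by
    intro ξ
    obtain ⟨J, hJ⟩ := prod_bound (t := ‖ξ‖) (μ := fun j => (cd d)⁻¹ * ‖FT κ (a j • ξ)‖) hδ0 hA0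
      (by linarith : 0 < σ) (norm_nonneg _) (fun j => by positivity)
      (fun j => by
        have := norm_FT_le κ (a j • ξ)
        rw [hκ.int_norm, mul_one] at this
        rw [inv_mul_le_iff₀ hcd]; linarith)
      (fun j => by
        have := hdec (a j • ξ)
        rw [norm_smul, Real.norm_of_nonneg (ha0 j)] at this
        calc δ / ((j : ℝ) + 1) ^ σ * ‖ξ‖ * ((cd d)⁻¹ * ‖FT κ (a j • ξ)‖)
            = (cd d)⁻¹ * (a j * ‖ξ‖ * ‖FT κ (a j • ξ)‖) := by simp only [ha]; ring
          _ ≤ A := by rw [hA]; gcongr)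
    refine le_of_tendsto (hFTlim ξ).norm ?_
    filter_upwards [Filter.eventually_ge_atTop J] with n hn
    refine (hFT ξ n).trans ?_
    rw [mul_assoc B]
    exact mul_le_mul_of_nonneg_left (hJ n hn) hB0
  have hσp : 0 < 1 / σ := by positivity
  refine ⟨χ, ⟨smooth_of_decay hχL.continuous hχi hc00 hσp hdecay, hχc, ?_⟩, hχ1, hχ0⟩
  intro N hN
  obtain ⟨C, hC, hcomp⟩ := pow_compare (a := 1 / s) (b := 1 / σ) (c := c0) (N := N) (by positivity)
    (by gcongr) hc00 hN
  refine ⟨(B + 1) * Real.exp 1 * Real.exp C, by positivity, fun ξ => (hdecay ξ).trans ?_⟩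
  rw [mul_assoc _ (Real.exp C), ← Real.exp_add]
  gcongr
  · linarith
  · have := hcomp ‖ξ‖ (norm_nonneg _)
    linarith


lemma IsSCutoff.integrable {s : ℝ} {φ : Eu d → ℂ} (h : IsSCutoff s φ) : Integrable φ :=
  h.1.continuous.integrable_of_hasCompactSupport h.2.1

lemma IsSCutoff.integrable_FT {s : ℝ} (hs : 0 < s) {φ : Eu d → ℂ} (h : IsSCutoff s φ) :
    Integrable (FT φ) := by
  obtain ⟨C, hC, hb⟩ := h.2.2 1 one_pos
  exact integrable_FT_of_decay h.integrable one_pos (by positivity) hb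

lemma IsSCutoff.const_mul {s : ℝ} {φ : Eu d → ℂ} (h : IsSCutoff s φ) (c : ℂ) :
    IsSCutoff s (fun x => c * φ x) := by
  refine ⟨contDiff_const.mul h.1, h.2.1.mul_left, fun N hN => ?_⟩
  obtain ⟨C, hC, hb⟩ := h.2.2 N hN
  refine ⟨(‖c‖ + 1) * C, by positivity, fun ξ => ?_⟩
  rw [FT_const_mul, norm_mul, mul_assoc]
  gcongr
  · linarith
  · exact hb ξ

lemma compact_affine {φ : Eu d → ℂ} (h : HasCompactSupport φ) (x0 : Eu d) {r : ℝ} (hr : 0 < r) :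
    HasCompactSupport (fun x => φ (r⁻¹ • (x - x0))) := by
  obtain ⟨R, hR⟩ := h.isCompact.isBounded.subset_closedBall (0 : Eu d)
  refine HasCompactSupport.intro (isCompact_closedBall x0 (r * R)) fun x hx => ?_
  by_contra h1
  apply hx
  have h2 : r⁻¹ • (x - x0) ∈ Metric.closedBall (0 : Eu d) R := hR (subset_tsupport _ h1)
  rw [mem_closedBall_zero_iff, norm_smul, Real.norm_of_nonneg (by positivity),
    inv_mul_le_iff₀ hr] at h2
  rwa [Metric.mem_closedBall, dist_eq_norm]

lemma IsSCutoff.affine {s : ℝ} {φ : Eu d → ℂ} (h : IsSCutoff s φ) (x0 : Eu d) {r : ℝ}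
    (hr : 0 < r) : IsSCutoff s (fun x => φ (r⁻¹ • (x - x0))) := by
  refine ⟨h.1.comp ((contDiff_id.sub contDiff_const).const_smul _), compact_affine h.2.1 x0 hr,
    fun N hN => ?_⟩
  obtain ⟨C, hC, hb⟩ := h.2.2 (N / r ^ (1 / s)) (by positivity)
  refine ⟨r ^ d * C, by positivity, fun ξ => ?_⟩
  rw [norm_FT_affine φ x0 hr, mul_assoc]
  gcongr
  refine (hb _).trans (le_of_eq ?_)
  rw [norm_smul, Real.norm_of_nonneg hr.le, Real.mul_rpow hr.le (norm_nonneg _)]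
  have : r ^ (1 / s) ≠ 0 := by positivity
  congr 2
  field_simp

lemma FT_lip {χ : Eu d → ℂ} (hc : Continuous χ) (h : HasCompactSupport χ) :
    ∃ L : ℝ, 0 < L ∧ ∀ ξ η, ‖FT χ ξ - FT χ (ξ - η)‖ ≤ L * ‖η‖ := by
  have hi : Integrable χ := hc.integrable_of_hasCompactSupport h
  have hi2 : Integrable (fun x => ‖χ x‖ * ‖x‖) := by
    refine Continuous.integrable_of_hasCompactSupport (by fun_prop) ?_
    exact h.norm.mul_right
  have hcd := cd_pos (d := d)
  have h0 : 0 ≤ ∫ x, ‖χ x‖ * ‖x‖ := integral_nonneg fun _ => by positivity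
  refine ⟨cd d * ((∫ x, ‖χ x‖ * ‖x‖) + 1), by positivity, fun ξ η => ?_⟩
  rw [FT_def, FT_def, ← mul_sub, ← integral_sub (integrable_mul_exp hi _) (integrable_mul_exp hi _),
    norm_mul, Complex.norm_real, Real.norm_of_nonneg hcd.le, mul_assoc]
  gcongr
  have : ‖∫ x, (χ x * Complex.exp (-(⟪x, ξ⟫ : ℝ) * Complex.I) -
      χ x * Complex.exp (-(⟪x, ξ - η⟫ : ℝ) * Complex.I))‖ ≤ ∫ x, ‖χ x‖ * ‖x‖ * ‖η‖ := by
    refine norm_integral_le_of_norm_le (hi2.mul_const _) ?_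
    filter_upwards with x
    have h1 : χ x * Complex.exp (-(⟪x, ξ⟫ : ℝ) * Complex.I) -
      χ x * Complex.exp (-(⟪x, ξ - η⟫ : ℝ) * Complex.I) =
      χ x * (Complex.exp (-(⟪x, ξ - η⟫ : ℝ) * Complex.I) *
        (Complex.exp (Complex.I * ((-⟪x, η⟫ : ℝ) : ℂ)) - 1)) := by
      rw [mul_sub, ← Complex.exp_add, mul_one, mul_sub, inner_sub_right]
      congr 3
      push_cast; ring
    rw [h1, norm_mul, norm_mul, norm_cexp, one_mul, mul_assoc]
    gcongr
    refine (Real.norm_exp_I_mul_ofReal_sub_one_le).trans ?_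
    rw [norm_neg]
    exact norm_inner_le_norm x η
  rw [integral_mul_const] at this
  refine this.trans ?_
  gcongr
  linarith

lemma near_id {s : ℝ} (hs : 1 < s) {χ φ : Eu d → ℂ} (hχ : IsSCutoff s χ) (hφ : IsSCutoff s φ)
    (x0 : Eu d) (hx0 : φ x0 = 1) : ∃ K : ℝ, 0 < K ∧ ∀ r : ℝ, 0 < r → r ≤ 1 → ∀ ξ : Eu d,
      ‖FT (fun y => χ y * (1 - φ (x0 + r • y))) ξ‖ ≤
        K * Real.sqrt r * Real.exp (-2 * ‖ξ‖ ^ (1 / s)) := by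
  have hs0 : 0 < s := by linarith
  have hp : 0 < 1 / s := by positivity
  have hp1 : 1 / s ≤ 1 := by rw [div_le_one hs0]; exact hs.le
  have hcd := cd_pos (d := d)
  set p := 1 / s with hpdef
  obtain ⟨L, hL, hlip⟩ := FT_lip hχ.1.continuous hχ.2.1
  obtain ⟨C, hC, hCb⟩ := hχ.2.2 4 (by norm_num)
  obtain ⟨C3, hC3, hC3b⟩ := hφ.2.2 3 (by norm_num)
  set W : Eu d → ℝ := fun η => ‖FT φ η‖ * ((1 + ‖η‖) * Real.exp (2 * ‖η‖ ^ p)) with hW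
  have hWi : Integrable W := by
    have h1 := continuous_FT hφ.integrable
    have h2 := continuous_w (d := d) hp
    refine ((integrable_exp_w_pow (d := d) one_pos hp 1).const_mul C3).mono'
      (Continuous.aestronglyMeasurable (by fun_prop)) ?_
    filter_upwards with η
    rw [Real.norm_of_nonneg (by positivity), pow_one]
    calc W η ≤ (C3 * Real.exp (-3 * ‖η‖ ^ p)) * ((1 + ‖η‖) * Real.exp (2 * ‖η‖ ^ p)) := by
          simp only [hW]; gcongr; exact hC3b η
      _ = C3 * ((1 + ‖η‖) * (Real.exp (-3 * ‖η‖ ^ p) * Real.exp (2 * ‖η‖ ^ p))) := by ring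
      _ = _ := by rw [← Real.exp_add]; congr 3; ring
  have hW0 : 0 ≤ ∫ η, W η := integral_nonneg fun _ => by positivity
  set M := Real.sqrt (2 * L * C) with hM
  have hM0 : 0 ≤ M := Real.sqrt_nonneg _
  -- the pointwise difference estimate
  have hD : ∀ ξ η, ‖FT χ ξ - FT χ (ξ - η)‖ ≤
      M * (Real.sqrt ‖η‖ * Real.exp (2 * ‖η‖ ^ p)) * Real.exp (-2 * ‖ξ‖ ^ p) := by
    intro ξ η
    have h1 := hlip ξ η
    have hw := w_sub hp.le hp1 ξ η
    have hη0 : 0 ≤ ‖η‖ ^ p := by positivity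
    have h2 : ‖FT χ ξ - FT χ (ξ - η)‖ ≤ 2 * C * Real.exp (4 * ‖η‖ ^ p + -4 * ‖ξ‖ ^ p) := by
      calc _ ≤ ‖FT χ ξ‖ + ‖FT χ (ξ - η)‖ := norm_sub_le _ _
        _ ≤ C * Real.exp (-4 * ‖ξ‖ ^ p) + C * Real.exp (-4 * ‖ξ - η‖ ^ p) :=
          add_le_add (hCb _) (hCb _)
        _ ≤ C * Real.exp (4 * ‖η‖ ^ p + -4 * ‖ξ‖ ^ p) +
            C * Real.exp (4 * ‖η‖ ^ p + -4 * ‖ξ‖ ^ p) := by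
          gcongr <;> linarith
        _ = _ := by ring
    apply le_of_sq_le_sq _ (by positivity)
    rw [mul_pow, mul_pow, mul_pow, hM, Real.sq_sqrt (by positivity), Real.sq_sqrt (by positivity),
      ← Real.exp_nat_mul, ← Real.exp_nat_mul]
    calc ‖FT χ ξ - FT χ (ξ - η)‖ ^ 2 = ‖FT χ ξ - FT χ (ξ - η)‖ * ‖FT χ ξ - FT χ (ξ - η)‖ := sq _
      _ ≤ (L * ‖η‖) * (2 * C * Real.exp (4 * ‖η‖ ^ p + -4 * ‖ξ‖ ^ p)) := by gcongr
      _ = 2 * L * C * (‖η‖ * Real.exp (4 * ‖η‖ ^ p)) * Real.exp (-4 * ‖ξ‖ ^ p) := by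
        rw [Real.exp_add]; ring
      _ = _ := by
        have a1 : ((2 : ℕ) : ℝ) * (2 * ‖η‖ ^ p) = 4 * ‖η‖ ^ p := by push_cast; ring
        have a2 : ((2 : ℕ) : ℝ) * (-2 * ‖ξ‖ ^ p) = -4 * ‖ξ‖ ^ p := by push_cast; ring
        rw [a1, a2]
  refine ⟨cd d * M * ((∫ η, W η) + 1) + 1, by positivity, fun r hr hr1 ξ => ?_⟩
  -- the dilated function
  set φr : Eu d → ℂ := fun y => φ (x0 + r • y) with hφr
  have hφr' : φr = fun y => φ ((r⁻¹)⁻¹ • (y - (-(r⁻¹ • x0)))) := by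
    ext y
    rw [hφr, inv_inv, sub_neg_eq_add, smul_add, smul_smul, mul_inv_cancel₀ hr.ne', one_smul,
      add_comm]
  have hri : 0 < r⁻¹ := by positivity
  have hcut : IsSCutoff s φr := by rw [hφr']; exact hφ.affine _ hri
  have hnorm : ∀ η, ‖FT φr η‖ = (r⁻¹) ^ d * ‖FT φ (r⁻¹ • η)‖ := by
    intro η; rw [hφr']; exact norm_FT_affine φ _ hri η
  have hFi := hcut.integrable_FT hs0
  have h1 : FT (fun y => χ y * (1 - φr y)) ξ =
      (cd d : ℂ) * ∫ η, FT φr η * (FT χ ξ - FT χ (ξ - η)) := by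
    have e1 : (fun y => χ y * (1 - φr y)) = fun y => χ y - φr y * χ y := by ext y; ring
    have hci : Integrable (fun y => φr y * χ y) :=
      (hcut.1.continuous.mul hχ.1.continuous).integrable_of_hasCompactSupport hcut.2.1.mul_right
    rw [e1, FT_sub hχ.integrable hci, FT_mul hcut.1.continuous hcut.integrable hFi hχ.integrable]
    have e2 : (1 : ℂ) = (cd d : ℂ) * ∫ η, FT φr η := by
      have := FT_inv hcut.1.continuous hcut.integrable hFi 0
      simpa [hφr, hx0] using this
    have hi2 : Integrable (fun η => FT φr η * FT χ (ξ - η)) := by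
      have hb := norm_FT_le χ
      have hcχ := continuous_FT hχ.integrable
      exact hFi.mul_bdd (c := cd d * ∫ x, ‖χ x‖)
        (Continuous.aestronglyMeasurable (by fun_prop)) (by filter_upwards with η using hb _)
    simp only [mul_sub]
    rw [integral_sub (hFi.mul_const _) hi2, integral_mul_const, mul_sub, ← mul_assoc, ← e2, one_mul]
  rw [h1, norm_mul, Complex.norm_real, Real.norm_of_nonneg hcd.le]
  have hWr : Integrable (fun η : Eu d => W (r⁻¹ • η)) := hWi.comp_smul hri.ne'
  have h2 : ‖∫ η, FT φr η * (FT χ ξ - FT χ (ξ - η))‖ ≤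
      ∫ η, (r⁻¹) ^ d * (M * Real.sqrt r * Real.exp (-2 * ‖ξ‖ ^ p)) * W (r⁻¹ • η) := by
    refine norm_integral_le_of_norm_le (hWr.const_mul _) ?_
    filter_upwards with η
    rw [norm_mul, hnorm]
    have e3 : ‖r⁻¹ • η‖ = r⁻¹ * ‖η‖ := by rw [norm_smul, Real.norm_of_nonneg hri.le]
    have e4 : Real.sqrt ‖η‖ ≤ Real.sqrt r * (1 + ‖r⁻¹ • η‖) := by
      have : ‖η‖ = r * ‖r⁻¹ • η‖ := by rw [e3]; field_simp
      rw [this, Real.sqrt_mul hr.le]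
      gcongr
      apply Real.sqrt_le_iff.2
      constructor
      · positivity
      · nlinarith [norm_nonneg (r⁻¹ • η)]
    have e5 : ‖η‖ ^ p ≤ ‖r⁻¹ • η‖ ^ p := by
      gcongr
      rw [e3]
      exact le_mul_of_one_le_left (norm_nonneg _) ((one_le_inv₀ hr).2 hr1)
    calc (r⁻¹) ^ d * ‖FT φ (r⁻¹ • η)‖ * ‖FT χ ξ - FT χ (ξ - η)‖
        ≤ (r⁻¹) ^ d * ‖FT φ (r⁻¹ • η)‖ * (M * ((Real.sqrt r * (1 + ‖r⁻¹ • η‖)) *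
            Real.exp (2 * ‖r⁻¹ • η‖ ^ p)) * Real.exp (-2 * ‖ξ‖ ^ p)) := by
          refine mul_le_mul_of_nonneg_left ((hD ξ η).trans ?_) (by positivity)
          gcongr
      _ = _ := by simp only [hW]; ring
  rw [integral_const_mul, Measure.integral_comp_smul volume W, finrank_euclideanSpace,
    Fintype.card_fin, abs_of_pos (by positivity), smul_eq_mul] at h2
  calc cd d * ‖∫ η, FT φr η * (FT χ ξ - FT χ (ξ - η))‖
      ≤ cd d * ((r⁻¹) ^ d * (M * Real.sqrt r * Real.exp (-2 * ‖ξ‖ ^ p)) *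
        (((r⁻¹) ^ d)⁻¹ * ∫ η, W η)) := by gcongr
    _ = (cd d * M * (∫ η, W η)) * Real.sqrt r * Real.exp (-2 * ‖ξ‖ ^ p) := by
      have : (r⁻¹) ^ d ≠ 0 := by positivity
      field_simp
    _ ≤ _ := by
      gcongr
      nlinarith [mul_nonneg hcd.le hM0]


lemma local_inverse {s : ℝ} (hs : 1 < s) {φ : Eu d → ℂ} (hφ : IsSCutoff s φ) (x0 : Eu d)
    (hx0 : φ x0 = 1) :
    ∃ ψ : Eu d → ℂ, IsSCutoff s ψ ∧ (∃ U : Set (Eu d), IsOpen U ∧ x0 ∈ U ∧ ∀ x ∈ U, ψ x = 1) ∧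
    ∃ C ε B : ℝ, 0 < C ∧ 0 < ε ∧ ∃ g : ℕ → Eu d → ℂ, (∀ M, Continuous (g M)) ∧
      (∀ M, Integrable (g M)) ∧ (∀ M ξ, ‖FT (g M) ξ‖ ≤ C * Real.exp (-ε * ‖ξ‖ ^ (1 / s))) ∧
      ∀ M x, ‖ψ x - g M x * φ x‖ ≤ B * (1 / 2) ^ M := by
  have hs0 : 0 < s := by linarith
  have hp : 0 < 1 / s := by positivity
  have hp1 : 1 / s ≤ 1 := by rw [div_le_one hs0]; exact hs.le
  have hcd := cd_pos (d := d)
  obtain ⟨χ, hχ, hχ1, hχ0⟩ := exists_bump (d := d) hs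
  obtain ⟨K, hK, hKb⟩ := near_id hs hχ hφ x0 hx0
  set p := 1 / s with hpdef
  have hI0 : 0 ≤ ∫ ξ : Eu d, Real.exp (-1 * ‖ξ‖ ^ p) := integral_nonneg fun _ => by positivity
  set Q := cd d * K * ∫ ξ : Eu d, Real.exp (-1 * ‖ξ‖ ^ p) with hQ
  have hQ0 : 0 ≤ Q := by positivity
  set t := 1 / (2 * (Q + 1)) with ht
  have ht0 : 0 < t := by positivity
  have ht1 : t ≤ 1 := by rw [ht, div_le_one (by positivity)]; linarith
  have hQt : Q * t ≤ 1 / 2 := by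
    rw [ht, mul_one_div, div_le_iff₀ (by positivity)]; linarith
  set r := t ^ 2 with hrdef
  have hr : 0 < r := by positivity
  have hr1 : r ≤ 1 := pow_le_one₀ ht0.le ht1
  have hsq : Real.sqrt r = t := Real.sqrt_sq ht0.le
  have hFh := hKb r hr hr1
  rw [hsq] at hFh
  set h : Eu d → ℂ := fun y => χ y * (1 - φ (x0 + r • y)) with hh
  have hχc := hχ.1.continuous
  have hφc := hφ.1.continuous
  have hhc : Continuous h := by fun_prop
  have hhi : Integrable h := hhc.integrable_of_hasCompactSupport hχ.2.1.mul_right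
  have hpt : ∀ ξ : Eu d, ‖FT h ξ‖ * Real.exp (1 * ‖ξ‖ ^ p) ≤
      K * t * Real.exp (-1 * ‖ξ‖ ^ p) := by
    intro ξ
    calc _ ≤ (K * t * Real.exp (-2 * ‖ξ‖ ^ p)) * Real.exp (1 * ‖ξ‖ ^ p) := by
          gcongr; exact hFh ξ
      _ = _ := by rw [mul_assoc, ← Real.exp_add]; congr 2; ring
  have hwc := continuous_w (d := d) hp
  have hFc := continuous_FT hhi
  have hH : Integrable (fun ξ => ‖FT h ξ‖ * Real.exp (1 * ‖ξ‖ ^ p)) := by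
    refine ((integrable_exp_w (d := d) one_pos hp).const_mul (K * t)).mono'
      (Continuous.aestronglyMeasurable (by fun_prop)) ?_
    filter_upwards with ξ
    rw [Real.norm_of_nonneg (by positivity)]
    exact hpt ξ
  have hHle : cd d * ∫ ξ, ‖FT h ξ‖ * Real.exp (1 * ‖ξ‖ ^ p) ≤ 1 / 2 := by
    refine le_trans ?_ hQt
    have := integral_mono hH ((integrable_exp_w (d := d) one_pos hp).const_mul (K * t)) hpt
    rw [integral_const_mul] at this
    calc _ ≤ cd d * (K * t * ∫ ξ : Eu d, Real.exp (-1 * ‖ξ‖ ^ p)) := by gcongr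
      _ = _ := by rw [hQ]; ring
  have hFhi : Integrable (FT h) := integrable_FT_of_decay hhi two_pos hp hFh
  have hhle : ∀ y, ‖h y‖ ≤ 1 / 2 := by
    intro y
    rw [FT_inv hhc hhi hFhi y, norm_mul, Complex.norm_real, Real.norm_of_nonneg hcd.le]
    refine le_trans ?_ hHle
    gcongr
    refine norm_integral_le_of_norm_le hH ?_
    filter_upwards with ξ
    rw [norm_mul]
    gcongr
    rw [Complex.norm_exp_ofReal_mul_I]
    exact Real.one_le_exp (by positivity)
  -- the inner cutoff
  have h8 : (0 : ℝ) < 1 / 8 := by norm_num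
  set ψ' : Eu d → ℂ := fun y => χ ((1 / 8 : ℝ)⁻¹ • (y - 0)) with hψ'
  have hψc : IsSCutoff s ψ' := hχ.affine 0 h8
  have hψ1 : ∀ y, ‖y‖ ≤ 1 / 8 → ψ' y = 1 := by
    intro y hy
    apply hχ1
    rw [norm_smul, sub_zero]
    norm_num
    linarith
  have hψ0 : ∀ y, 1 ≤ ‖y‖ → ψ' y = 0 := by
    intro y hy
    apply hχ0
    rw [norm_smul, sub_zero]
    norm_num
    linarith
  obtain ⟨C, hC, hCb⟩ := hψc.2.2 1 one_pos
  obtain ⟨B, hB⟩ := hψc.2.1.exists_bound_of_continuous hψc.1.continuous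
  have hψcc := hψc.1.continuous
  have hTi : ∀ n : ℕ, Integrable (fun y => h y ^ n * ψ' y) := fun n =>
    Continuous.integrable_of_hasCompactSupport (by fun_prop) hψc.2.1.mul_left
  have hT : ∀ n : ℕ, ∀ ξ, ‖FT (fun y => h y ^ n * ψ' y) ξ‖ ≤
      (C * (1 / 2) ^ n) * Real.exp (-1 * ‖ξ‖ ^ p) := by
    intro n
    induction n with
    | zero => intro ξ; simp only [pow_zero, one_mul, mul_one]; exact hCb ξ
    | succ n ih =>
      intro ξ
      have := mul_estimate hp hp1 one_pos hhc hhi hH (hTi n) ih ξ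
      have e : (fun y => h y ^ (n + 1) * ψ' y) = fun y => h y * (h y ^ n * ψ' y) := by
        ext y; ring
      rw [e]
      refine this.trans ?_
      calc _ ≤ (1 / 2) * (C * (1 / 2) ^ n) * Real.exp (-1 * ‖ξ‖ ^ p) := by gcongr
        _ = _ := by ring
  set G : ℕ → Eu d → ℂ := fun M y => ∑ n ∈ Finset.range M, h y ^ n * ψ' y with hG
  have hGc : ∀ M, Continuous (G M) := fun M => by fun_prop
  have hGi : ∀ M, Integrable (G M) := fun M => integrable_finsetSum _ fun n _ => hTi n
  have hGF : ∀ M ξ, ‖FT (G M) ξ‖ ≤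
      (C * (2 - 2 * (1 / 2) ^ M)) * Real.exp (-1 * ‖ξ‖ ^ p) := by
    intro M ξ
    induction M with
    | zero => simp [hG, FT_def]
    | succ M ih =>
      have e : G (M + 1) = fun y => G M y + h y ^ M * ψ' y := by
        ext y; simp only [hG]; rw [Finset.sum_range_succ]
      rw [e, FT_add (hGi M) (hTi M)]
      refine (norm_add_le _ _).trans ((add_le_add ih (hT M ξ)).trans (le_of_eq ?_))
      ring
  have hGφ : ∀ M y, ψ' y - G M y * φ (x0 + r • y) = h y ^ M * ψ' y := by
    intro M y
    have e1 : G M y = (∑ n ∈ Finset.range M, h y ^ n) * ψ' y := by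
      simp only [hG]; rw [Finset.sum_mul]
    rw [e1]
    rcases le_total 1 ‖y‖ with hy | hy
    · rw [hψ0 y hy]; ring
    · have e2 : φ (x0 + r • y) = 1 - h y := by
        simp only [hh]; rw [hχ1 y hy]; ring
      have e3 := geom_sum_mul_neg (h y) M
      rw [e2]
      linear_combination (-ψ' y) * e3
  have hxx : ∀ x, x0 + r • (r⁻¹ • (x - x0)) = x := by
    intro x; rw [smul_smul, mul_inv_cancel₀ hr.ne', one_smul]; abel
  refine ⟨fun x => ψ' (r⁻¹ • (x - x0)), hψc.affine x0 hr,
    ⟨Metric.ball x0 (r / 8), Metric.isOpen_ball, Metric.mem_ball_self (by positivity), ?_⟩,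
    r ^ d * (C * 2), r ^ p, B, by positivity, by positivity,
    fun M x => G M (r⁻¹ • (x - x0)), ?_, ?_, ?_, ?_⟩
  · intro x hx
    apply hψ1
    rw [Metric.mem_ball, dist_eq_norm] at hx
    rw [norm_smul, Real.norm_of_nonneg (by positivity), inv_mul_le_iff₀ hr]
    linarith
  · intro M
    have := hGc M
    fun_prop
  · intro M
    exact ((hGi M).comp_smul (inv_ne_zero hr.ne')).comp_sub_right x0
  · intro M ξ
    rw [norm_FT_affine _ x0 hr ξ, mul_assoc]
    gcongr
    refine (hGF M _).trans ?_
    rw [norm_smul, Real.norm_of_nonneg hr.le, Real.mul_rpow hr.le (norm_nonneg _)]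
    have : (0 : ℝ) ≤ (1 / 2) ^ M := by positivity
    have e : -1 * (r ^ p * ‖ξ‖ ^ p) = -r ^ p * ‖ξ‖ ^ p := by ring
    rw [e]
    gcongr
    linarith
  · intro M x
    have := hGφ M (r⁻¹ • (x - x0))
    rw [hxx] at this
    rw [this, norm_mul, norm_pow, mul_comm]
    have hb := hB (r⁻¹ • (x - x0))
    have h0 : 0 ≤ B := (norm_nonneg _).trans hb
    gcongr
    exact hhle _

lemma holder_FL {u : Eu d → ℂ} (hu : Integrable u) {p k : ℝ} (hp : 0 < p) (hk : 0 < k)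
    {q : ℝ≥0∞} (hq : 1 ≤ q) {Γ : Set (Eu d)}
    (hfin : FLSemi (fun ξ => Real.exp (k * ‖ξ‖ ^ p)) q u Γ ≠ ∞) :
    IntegrableOn (fun ξ => ‖FT u ξ‖ * Real.exp (k / 2 * ‖ξ‖ ^ p)) Γ := by
  have hwc := continuous_w (d := d) hp
  have hFc := continuous_FT hu
  have h1 : MemLp (fun ξ => ‖FT u ξ‖ * Real.exp (k * ‖ξ‖ ^ p)) q (volume.restrict Γ) :=
    ⟨Continuous.aestronglyMeasurable (by fun_prop), lt_top_iff_ne_top.2 hfin⟩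
  haveI : ENNReal.HolderConjugate q (ENNReal.conjExponent q) :=
    ENNReal.HolderConjugate.conjExponent hq
  have hq' : 1 ≤ ENNReal.conjExponent q := ENNReal.HolderConjugate.one_le _ q
  have h2 : MemLp (fun ξ : Eu d => Real.exp (-(k / 2) * ‖ξ‖ ^ p)) (ENNReal.conjExponent q)
      (volume.restrict Γ) := (memLp_exp_w (by positivity) hp _ hq').restrict Γ
  have h3 := h2.mul (r := 1) h1
  rw [memLp_one_iff_integrable] at h3
  refine h3.congr ?_
  filter_upwards with ξ
  simp only [Pi.mul_apply]
  rw [mul_assoc, ← Real.exp_add]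
  congr 2
  ring

lemma main_hard {s : ℝ} (hs : 1 < s) {q : ℝ≥0∞} (hq : 1 ≤ q) {f : Eu d → ℂ} (hf : Integrable f)
    {x0 ξ0 : Eu d} {k : ℝ} (hk : 0 < k) {φ : Eu d → ℂ} (hφ : IsSCutoff s φ) (hφ0 : φ x0 ≠ 0)
    {Γ : Set (Eu d)} (ho : IsOpen Γ) (hΓ : IsCone Γ) (hξ : ξ0 ∈ Γ)
    (hfin : FLSemi (fun ξ => Real.exp (k * ‖ξ‖ ^ (1 / s))) q (fun x => φ x * f x) Γ ≠ ∞) :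
    ∃ ψ : Eu d → ℂ, IsSCutoff s ψ ∧
    (∃ U : Set (Eu d), IsOpen U ∧ x0 ∈ U ∧ ∀ x ∈ U, ψ x = 1) ∧
    ∃ Γ : Set (Eu d), IsOpen Γ ∧ IsCone Γ ∧ ξ0 ∈ Γ ∧
      ∃ C k : ℝ, 0 < C ∧ 0 < k ∧
        ∀ ξ ∈ Γ, ‖FT (fun x => ψ x * f x) ξ‖ ≤ C * Real.exp (-k * ‖ξ‖ ^ (1 / s)) := by
  have hs0 : 0 < s := by linarith
  have hp : 0 < 1 / s := by positivity
  have hp1 : 1 / s ≤ 1 := by rw [div_le_one hs0]; exact hs.le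
  have hcd := cd_pos (d := d)
  have hcut : ∀ θ : Eu d → ℂ, IsSCutoff s θ → Integrable (fun x => θ x * f x) := by
    intro θ hθ
    obtain ⟨B, hB⟩ := hθ.2.1.exists_bound_of_continuous hθ.1.continuous
    exact hf.bdd_mul (c := B) hθ.1.continuous.aestronglyMeasurable
      (by filter_upwards with x using hB x)
  have hInt := holder_FL (hcut φ hφ) hp hk hq hfin
  obtain ⟨ψ, hψ, hU, C, ε, B, hC, hε, g, hgc, hgi, hgF, hgB⟩ :=
    local_inverse hs (hφ.const_mul (φ x0)⁻¹) x0 (inv_mul_cancel₀ hφ0)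
  set a := (φ x0)⁻¹ with ha
  have ha0 : a ≠ 0 := inv_ne_zero hφ0
  obtain ⟨Γ', ho', hΓ', hξ', c, hc, hcone⟩ := exists_cone ho hΓ hξ
  obtain ⟨C', κ, hC', hκ, hest⟩ := cone_estimate hp hp1 ho hc hcone (hcut φ hφ)
    (by positivity : 0 < k / 2) hInt hε hC
  have ha1 : 0 < ‖a‖ := norm_pos_iff.2 ha0
  refine ⟨ψ, hψ, hU, Γ', ho', hΓ', hξ', ‖a‖ * C', κ, by positivity, hκ, fun ξ hξ => ?_⟩
  have hb : ∀ M : ℕ, ‖FT (fun x => ψ x * f x) ξ‖ ≤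
      ‖a‖ * C' * Real.exp (-κ * ‖ξ‖ ^ (1 / s)) + (1 / 2) ^ M * (cd d * (B * ∫ x, ‖f x‖)) := by
    intro M
    have hga : Integrable (fun x => a * (g M x * (φ x * f x))) := by
      have h1 : Integrable (fun x => ψ x * f x) := hcut ψ hψ
      have h2 : Integrable (fun x => (ψ x - g M x * (a * φ x)) * f x) := by
        have hgM := hgc M
        have := hψ.1.continuous
        have := hφ.1.continuous
        exact hf.bdd_mul (c := B * (1 / 2) ^ M) (Continuous.aestronglyMeasurable (by fun_prop))
          (by filter_upwards with x using hgB M x)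
      refine (h1.sub h2).congr ?_
      filter_upwards with x
      simp only [Pi.sub_apply]
      ring
    have h3 : ‖FT (fun x => ψ x * f x) ξ - FT (fun x => a * (g M x * (φ x * f x))) ξ‖ ≤
        cd d * (B * (1 / 2) ^ M * ∫ x, ‖f x‖) := by
      rw [← FT_sub (hcut ψ hψ) hga]
      refine (norm_FT_le _ _).trans ?_
      gcongr
      rw [← integral_const_mul]
      refine integral_mono (((hcut ψ hψ).sub hga).norm) (hf.norm.const_mul _) fun x => ?_
      have e : ψ x * f x - a * (g M x * (φ x * f x)) = (ψ x - g M x * (a * φ x)) * f x := by ring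
      simp only []
      rw [e, norm_mul]
      gcongr
      exact hgB M x
    have h4 := hest (g M) (hgc M) (hgi M) (hgF M) ξ hξ
    rw [FT_const_mul] at h3
    have h5 := norm_sub_norm_le (FT (fun x => ψ x * f x) ξ)
      (a * FT (fun x => g M x * (φ x * f x)) ξ)
    rw [norm_mul] at h5
    have h6 := mul_le_mul_of_nonneg_left h4 ha1.le
    calc _ ≤ ‖a‖ * ‖FT (fun x => g M x * (φ x * f x)) ξ‖ + cd d * (B * (1 / 2) ^ M * ∫ x, ‖f x‖) := by
          linarith
      _ ≤ ‖a‖ * (C' * Real.exp (-κ * ‖ξ‖ ^ (1 / s))) + cd d * (B * (1 / 2) ^ M * ∫ x, ‖f x‖) := by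
          linarith
      _ = _ := by ring
  have hlim : Filter.Tendsto (fun M : ℕ => ‖a‖ * C' * Real.exp (-κ * ‖ξ‖ ^ (1 / s)) +
      (1 / 2 : ℝ) ^ M * (cd d * (B * ∫ x, ‖f x‖))) Filter.atTop
      (nhds (‖a‖ * C' * Real.exp (-κ * ‖ξ‖ ^ (1 / s)) + 0 * (cd d * (B * ∫ x, ‖f x‖)))) :=
    ((tendsto_pow_atTop_nhds_zero_of_lt_one (by norm_num) (by norm_num)).mul_const _).const_add _
  rw [zero_mul, add_zero] at hlim
  exact ge_of_tendsto' hlim hb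

lemma main_easy {s : ℝ} (hs : 1 < s) {q : ℝ≥0∞} (hq : 1 ≤ q) {u : Eu d → ℂ}
    {Γ : Set (Eu d)} (ho : IsOpen Γ) {C k : ℝ} (hk : 0 < k)
    (hb : ∀ ξ ∈ Γ, ‖FT u ξ‖ ≤ C * Real.exp (-k * ‖ξ‖ ^ (1 / s))) :
    FLSemi (fun ξ => Real.exp (k / 2 * ‖ξ‖ ^ (1 / s))) q u Γ ≠ ∞ := by
  have hs0 : 0 < s := by linarith
  have hp : 0 < 1 / s := by positivity
  have h1 : MemLp (fun ξ : Eu d => C * Real.exp (-(k / 2) * ‖ξ‖ ^ (1 / s))) q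
      (volume.restrict Γ) := ((memLp_exp_w (by positivity) hp _ hq).restrict Γ).const_mul C
  refine ne_top_of_le_ne_top h1.2.ne (eLpNorm_mono_ae_real ?_)
  filter_upwards [ae_restrict_mem ho.measurableSet] with ξ hξ
  rw [Real.norm_of_nonneg (by positivity)]
  calc _ ≤ C * Real.exp (-k * ‖ξ‖ ^ (1 / s)) * Real.exp (k / 2 * ‖ξ‖ ^ (1 / s)) := by
        gcongr; exact hb ξ hξ
    _ = _ := by rw [mul_assoc, ← Real.exp_add]; congr 2; ring

theorem stmt5 {d : ℕ} (s : ℝ) (hs : 1 < s) (q : ℝ≥0∞) (hq : 1 ≤ q)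
    (f : EuclideanSpace ℝ (Fin d) → ℂ) (hf : Integrable f) (hfc : HasCompactSupport f) :
    ⋂ k > (0 : ℝ), WF_FL s q (fun ξ => Real.exp (k * ‖ξ‖ ^ (1 / s))) f = WFs s f := by
  ext ⟨x0, ξ0⟩
  simp only [Set.mem_iInter]
  constructor
  · intro h
    refine ⟨(h 1 one_pos).1, ?_⟩
    rintro ⟨φ, hφ, ⟨U, hU, hxU, hU1⟩, Γ, ho, hΓ, hξ, C, k, hC, hk, hb⟩
    refine main_easy hs hq ho hk hb ((h (k / 2) (by positivity)).2 φ hφ ?_ Γ ho hΓ hξ)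
    rw [hU1 _ hxU]
    exact one_ne_zero
  · rintro ⟨h0, hn⟩ k hk
    refine ⟨h0, fun φ hφ hφ0 Γ ho hΓ hξ => ?_⟩
    by_contra hfin
    exact hn (main_hard hs hq hf hk hφ hφ0 ho hΓ hξ hfin)

end Paper
end
end
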